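/- arXiv:1402.2724 — 5 statements merged into one kernel-verified Lean document; each statement's English description precedes it below -/
import Mathlib

section
/- Every prime power q ≥ 4 satisfying q > W(q−1)^4 lies in G. -/
/-- `memG q` says that the prime power `q` lies in the set `𝒢`: for every finite field `F`
with `q` elements and all non-zero `a, c ∈ F`, there exists a primitive root `g` of `F`
(i.e. an element of multiplicative order `q - 1`, a generator of `Fˣ`) such that
`a - c * g` is also a primitive root of `F`. -/
def memG (q : ℕ) : Prop :=
  IsPrimePow q ∧ ∀ (F : Type) [Field F] [Fintype F], Fintype.card F = q →
    ∀ a c : F, a ≠ 0 → c ≠ 0 →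
      ∃ g : F, orderOf g = q - 1 ∧ orderOf (a - c * g) = q - 1

/-!
Weight each character `χ` of the finite field `F` by `μ(ord χ) / φ(ord χ)`. If `x ≠ 0` is not a
primitive root, then evaluation at `x` is a non-injective homomorphism on the cyclic group of
characters; the weights sum to zero over each coset of its kernel, hence
`∑ χ, μ(ord χ) / φ(ord χ) * χ x = 0`. The total mass of the weights is `W(q - 1)`.

With `g = (a / c) x` one has `a - c g = a (1 - x)`, so it is enough that the product of these
character sums at `(a / c) x` and at `a (1 - x)` has non-zero sum over `x`. It expands into Jacobi
sums: the pair of trivial characters contributes `q - 2`, and the other pairs, whose Jacobi sums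
have modulus at most `√q`, contribute at most `(W(q - 1)² - 1) √q`. This is smaller than `q - 2`
because `W(q - 1)² < √q` and `2 ≤ √q`.
-/

open ArithmeticFunction ArithmeticFunction.Moebius ArithmeticFunction.zeta Finset
  Subgroup
open scoped Nat

section CyclicGroup

theorem sum_orderOf_div_totient {G : Type*} [Group G] [IsCyclic G] [Fintype G] {K : Type*}
    [DivisionRing K] [CharZero K] (f : ℕ → K) :
    ∑ g : G, f (orderOf g) / φ (orderOf g) = ∑ d ∈ (Fintype.card G).divisors, f d := by
  have hmaps : ∀ g ∈ (univ : Finset G), orderOf g ∈ (Fintype.card G).divisors := fun g _ ↦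
    Nat.mem_divisors.mpr ⟨orderOf_dvd_card, Fintype.card_ne_zero⟩
  rw [← sum_fiberwise_of_maps_to' hmaps fun d ↦ f d / φ d]
  refine sum_congr rfl fun d hd ↦ ?_
  have hφ : (φ d : K) ≠ 0 :=
    Nat.cast_ne_zero.mpr (Nat.totient_pos.mpr (Nat.pos_of_mem_divisors hd)).ne'
  rw [sum_const, IsCyclic.card_orderOf_eq_totient (Nat.dvd_of_mem_divisors hd), nsmul_eq_mul,
    (Nat.cast_commute (φ d) _).eq, div_mul_cancel₀ _ hφ]

variable {G : Type*} [CommGroup G] [IsCyclic G] [Finite G]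

theorem mem_of_pow_natCard_eq_one {H : Subgroup G} {g : G} (hg : g ^ Nat.card H = 1) :
    g ∈ H := by
  have hle : H ≤ (powMonoidHom (Nat.card H) : G →* G).ker := fun h hh ↦
    congrArg Subtype.val (pow_card_eq_one' (x := (⟨h, hh⟩ : H)))
  have hcard : Nat.card (powMonoidHom (Nat.card H) : G →* G).ker ≤ Nat.card H := by
    rw [IsCyclic.card_powMonoidHom_ker]
    exact Nat.gcd_le_right _ Nat.card_pos
  rw [eq_of_le_of_card_ge hle hcard]
  exact hg

theorem exists_coprime_orderOf_mul_natCard (H : Subgroup G) {g : G}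
    (hg : Squarefree (orderOf g)) :
    ∃ h : H, (orderOf (g * h)).Coprime (Nat.card H) := by
  set n := Nat.card H
  set m := orderOf g / (orderOf g).gcd n
  have hmn : m.Coprime n := Nat.coprime_div_gcd_of_squarefree hg Nat.card_pos.ne'
  have hdvd : orderOf g ∣ m * n := by
    obtain ⟨k, hk⟩ := Nat.gcd_dvd_right (orderOf g) n
    exact ⟨k, by rw [← Nat.div_mul_cancel (Nat.gcd_dvd_left (orderOf g) n), mul_assoc, ← hk]⟩
  have hpow : g ^ ((m : ℤ) * n) = 1 := by
    exact_mod_cast orderOf_dvd_iff_pow_eq_one.mp hdvd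
  -- With `u * m + v * n = 1`, the factor `g ^ (u * m)` lies in `H`, and the order of the
  -- complementary factor `g ^ (v * n)` divides `m`.
  obtain ⟨u, v, huv⟩ := Nat.isCoprime_iff_coprime.mpr hmn
  have hmem : g ^ (-(u * m)) ∈ H := mem_of_pow_natCard_eq_one <| by
    rw [← zpow_natCast, ← zpow_mul, show -(u * m) * (n : ℤ) = m * n * -u by ring, zpow_mul, hpow,
      one_zpow]
  refine ⟨⟨_, hmem⟩, hmn.coprime_dvd_left (orderOf_dvd_of_pow_eq_one ?_)⟩
  rw [← zpow_one_add, show 1 + -(u * m) = v * n by linear_combination -huv, ← zpow_natCast,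
    ← zpow_mul, show v * n * (m : ℤ) = m * n * v by ring, zpow_mul, hpow, one_zpow]

end CyclicGroup

theorem sum_divisors_abs_moebius {n : ℕ} (hn : n ≠ 0) :
    ∑ d ∈ n.divisors, |μ d| = 2 ^ #n.primeFactors := by
  simp only [abs_moebius, sum_boole]
  rw [card_eq_sum_ones, Nat.sum_divisors_filter_squarefree hn, ← card_eq_sum_ones, card_powerset,
    Nat.factors_eq, List.toFinset_coe, Nat.toFinset_factors]
  norm_cast

/-- The weight `μ(d) / φ(d)` of a group element of order `d`. On the group of characters of a
finite field these are, up to a common factor, the coefficients in Vinogradov's formula for the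
indicator function of the primitive roots. -/
noncomputable def vinogradovWeight {G : Type*} [Monoid G] (g : G) : ℂ :=
  μ (orderOf g) / φ (orderOf g)

section VinogradovWeight

theorem vinogradovWeight_one {G : Type*} [Monoid G] : vinogradovWeight (1 : G) = 1 := by
  simp [vinogradovWeight]

theorem vinogradovWeight_mul_of_coprime {G : Type*} [CommMonoid G] {g h : G}
    (hgh : (orderOf g).Coprime (orderOf h)) :
    vinogradovWeight (g * h) = vinogradovWeight g * vinogradovWeight h := by
  simp only [vinogradovWeight, (Commute.all g h).orderOf_mul_eq_mul_orderOf_of_coprime hgh,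
    isMultiplicative_moebius.map_mul_of_coprime hgh, Nat.totient_mul hgh]
  push_cast
  rw [mul_div_mul_comm]

theorem squarefree_orderOf_of_vinogradovWeight_ne_zero {G : Type*} [Monoid G] {g : G}
    (hg : vinogradovWeight g ≠ 0) : Squarefree (orderOf g) :=
  moebius_ne_zero_iff_squarefree.mp fun h ↦ hg (by simp [vinogradovWeight, h])

theorem sum_vinogradovWeight (G : Type*) [Group G] [IsCyclic G] [Fintype G] [Nontrivial G] :
    ∑ g : G, vinogradovWeight g = 0 := by
  calc ∑ g : G, vinogradovWeight g
      = ∑ d ∈ (Fintype.card G).divisors, (μ d : ℂ) :=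
        sum_orderOf_div_totient fun d ↦ (μ d : ℂ)
    _ = ((μ * ζ : ArithmeticFunction ℤ) (Fintype.card G) : ℂ) := by
        rw [coe_mul_zeta_apply, Int.cast_sum]
    _ = 0 := by
        rw [moebius_mul_coe_zeta, one_apply_ne Fintype.one_lt_card.ne', Int.cast_zero]

theorem sum_norm_vinogradovWeight (G : Type*) [Group G] [IsCyclic G] [Fintype G] :
    ∑ g : G, ‖vinogradovWeight g‖ = 2 ^ #(Fintype.card G).primeFactors := by
  calc ∑ g : G, ‖vinogradovWeight g‖
      = ∑ g : G, (|μ (orderOf g)| : ℝ) / φ (orderOf g) := by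
        simp only [vinogradovWeight, norm_div, Complex.norm_intCast, Complex.norm_natCast]
    _ = ∑ d ∈ (Fintype.card G).divisors, (|μ d| : ℝ) :=
        sum_orderOf_div_totient fun d ↦ (|μ d| : ℝ)
    _ = 2 ^ #(Fintype.card G).primeFactors := by
        exact_mod_cast sum_divisors_abs_moebius Fintype.card_ne_zero

variable {G : Type*} [CommGroup G] [IsCyclic G]

theorem sum_vinogradovWeight_mul_subgroup [Finite G] (H : Subgroup G) [Fintype H] [Nontrivial H]
    (g : G) :
    ∑ h : H, vinogradovWeight (g * h) = 0 := by
  -- A non-zero weight on the coset `g * H` gives a representative of order coprime to `#H`, and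
  -- the weight is multiplicative with respect to it.
  by_contra hsum
  obtain ⟨h₁, -, hh₁⟩ := exists_ne_zero_of_sum_ne_zero hsum
  obtain ⟨h₂, hcop⟩ :=
    exists_coprime_orderOf_mul_natCard H (squarefree_orderOf_of_vinogradovWeight_ne_zero hh₁)
  refine hsum ?_
  calc ∑ h : H, vinogradovWeight (g * h)
      = ∑ h : H, vinogradovWeight (g * h₁ * h₂ * h) := by
        rw [← Equiv.sum_comp (Equiv.mulLeft (h₁ * h₂))]
        simp [mul_assoc]
    _ = ∑ h : H, vinogradovWeight (g * h₁ * h₂) * vinogradovWeight h := by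
        refine sum_congr rfl fun h _ ↦ ?_
        have hdvd : orderOf (h : G) ∣ Nat.card H := orderOf_coe h ▸ orderOf_dvd_natCard h
        rw [vinogradovWeight_mul_of_coprime (hcop.coprime_dvd_right hdvd)]
        simp only [vinogradovWeight, orderOf_coe]
    _ = 0 := by rw [← mul_sum, sum_vinogradovWeight, mul_zero]

theorem sum_vinogradovWeight_mul_eq_zero [Fintype G] {f : G →* ℂ} (hf : ¬ Function.Injective f) :
    ∑ g, vinogradovWeight g * f g = 0 := by
  classical
  have : Nontrivial f.ker := by
    rwa [nontrivial_iff_ne_bot, Ne, f.ker_eq_bot_iff]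
  have hshift (k : f.ker) :
      ∑ g : G, vinogradovWeight (g * k) * f g = ∑ g, vinogradovWeight g * f g := by
    rw [← Equiv.sum_comp (Equiv.mulRight (k : G)) fun g ↦ vinogradovWeight g * f g]
    have hk : f (k : G) = 1 := k.2
    simp only [Equiv.coe_mulRight, map_mul, hk, mul_one]
  have hcard : (Fintype.card f.ker : ℂ) ≠ 0 := Nat.cast_ne_zero.mpr Fintype.card_ne_zero
  refine (mul_eq_zero_iff_left hcard).mp ?_
  calc Fintype.card f.ker * ∑ g, vinogradovWeight g * f g
      = ∑ k : f.ker, ∑ g : G, vinogradovWeight (g * k) * f g := by simp [hshift]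
    _ = ∑ g : G, (∑ k : f.ker, vinogradovWeight (g * k)) * f g := by
        rw [sum_comm]; simp only [sum_mul]
    _ = 0 := by simp [sum_vinogradovWeight_mul_subgroup]

end VinogradovWeight

section Character

theorem norm_mulChar_coe {R : Type*} [CommRing R] [Finite Rˣ] (χ : MulChar R ℂ) (u : Rˣ) :
    ‖χ u‖ = 1 := by
  have := Fintype.ofFinite Rˣ
  exact Complex.norm_eq_one_of_mem_rootsOfUnity (χ.apply_mem_rootsOfUnity u)

theorem jacobiSum_inv_inv {R : Type*} [CommRing R] [Fintype R] (χ ψ : MulChar R ℂ) :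
    jacobiSum χ⁻¹ ψ⁻¹ = starRingEnd ℂ (jacobiSum χ ψ) := by
  simp only [jacobiSum, map_sum, map_mul, ← MulChar.star_eq_inv, MulChar.star_apply,
    starRingEnd_apply]

theorem sum_mul_sum_eq_sum_jacobiSum {R R' : Type*} [CommRing R] [Fintype R] [CommRing R']
    [Fintype (MulChar R R')] (w z : MulChar R R' → R') (u v : R) :
    ∑ x, (∑ χ, w χ * χ (u * x)) * ∑ ψ, z ψ * ψ (v * (1 - x)) =
      ∑ p : MulChar R R' × MulChar R R', w p.1 * z p.2 * (p.1 u * p.2 v) * jacobiSum p.1 p.2 := by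
  simp_rw [sum_mul_sum, jacobiSum, Fintype.sum_prod_type, mul_sum]
  rw [sum_comm]
  refine sum_congr rfl fun χ _ ↦ ?_
  rw [sum_comm]
  refine sum_congr rfl fun ψ _ ↦ sum_congr rfl fun x _ ↦ ?_
  rw [map_mul, map_mul]
  ring

variable {F : Type*} [Field F] [Fintype F]

instance isCyclic_mulChar {F : Type*} [Field F] [Finite F] : IsCyclic (MulChar F ℂ) :=
  (MulChar.mulEquiv_units F ℂ).some.isCyclic.mpr inferInstance

theorem natCard_mulChar : Nat.card (MulChar F ℂ) = Fintype.card F - 1 := by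
  rw [MulChar.card_eq_card_units_of_hasEnoughRootsOfUnity, Nat.card_units, Nat.card_eq_fintype_card]

theorem orderOf_eq_card_sub_one_of_injective_eval {u : Fˣ}
    (hu : Function.Injective fun χ : MulChar F ℂ ↦ χ u) :
    orderOf (u : F) = Fintype.card F - 1 := by
  refine Nat.dvd_antisymm (orderOf_dvd_of_pow_eq_one
    (FiniteField.pow_card_sub_one_eq_one (u : F) u.ne_zero)) ?_
  rw [← natCard_mulChar, ← IsCyclic.exponent_eq_card]
  refine Monoid.exponent_dvd_of_forall_pow_eq_one fun χ ↦ hu ?_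
  simp only [MulChar.pow_apply_coe, ← map_pow, pow_orderOf_eq_one, MulChar.one_apply_coe, map_one]

theorem orderOf_eq_card_sub_one_of_sum_ne_zero [Fintype (MulChar F ℂ)] {x : F}
    (hx : ∑ χ : MulChar F ℂ, vinogradovWeight χ * χ x ≠ 0) :
    orderOf x = Fintype.card F - 1 := by
  have hx0 : IsUnit x := by
    by_contra h
    exact hx (by simp [MulChar.map_nonunit _ h])
  obtain ⟨u, rfl⟩ := hx0
  let evalAt : MulChar F ℂ →* ℂ :=
    { toFun χ := χ u
      map_one' := MulChar.one_apply_coe u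
      map_mul' χ ψ := MulChar.mul_apply χ ψ u }
  refine orderOf_eq_card_sub_one_of_injective_eval (u := u) ?_
  by_contra h
  exact hx (sum_vinogradovWeight_mul_eq_zero (f := evalAt) h)

theorem norm_jacobiSum_le_sqrt {χ ψ : MulChar F ℂ} (h : (χ, ψ) ≠ 1) :
    ‖jacobiSum χ ψ‖ ≤ √(Fintype.card F) := by
  have hone : 1 ≤ √(Fintype.card F : ℝ) :=
    Real.one_le_sqrt.mpr (by exact_mod_cast Fintype.card_pos (α := F))
  rcases eq_or_ne χ 1 with rfl | hχ
  · have hψ : ψ ≠ 1 := fun hψ ↦ h (by rw [hψ, Prod.mk_one_one])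
    rwa [jacobiSum_one_nontrivial hψ, norm_neg, norm_one]
  rcases eq_or_ne ψ 1 with rfl | hψ
  · rwa [jacobiSum_comm, jacobiSum_one_nontrivial hχ, norm_neg, norm_one]
  by_cases hχψ : χ * ψ = 1
  · obtain rfl : ψ = χ⁻¹ := eq_inv_of_mul_eq_one_right hχψ
    rwa [jacobiSum_nontrivial_inv hχ, norm_neg, ← Units.coe_neg_one, norm_mulChar_coe]
  · have hchar : ringChar ℂ ≠ ringChar F := by
      rw [ringChar.eq_zero]
      exact (CharP.ringChar_ne_zero_of_finite F).symm
    have hmul := jacobiSum_mul_jacobiSum_inv hchar hχ hψ hχψ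
    rw [jacobiSum_inv_inv, Complex.mul_conj'] at hmul
    exact Real.le_sqrt_of_sq_le (le_of_eq (by exact_mod_cast hmul))

theorem norm_sum_mul_sum_sub_le [Fintype (MulChar F ℂ)] {w z : MulChar F ℂ → ℂ} (hw : w 1 = 1)
    (hz : z 1 = 1) (u v : Fˣ) :
    ‖∑ x, (∑ χ, w χ * χ (u * x)) * ∑ ψ, z ψ * ψ (v * (1 - x)) - (Fintype.card F - 2)‖ ≤
      ((∑ χ, ‖w χ‖) * ∑ ψ, ‖z ψ‖ - 1) * √(Fintype.card F) := by
  classical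
  have hmass : ∑ p ∈ univ.erase (1 : MulChar F ℂ × MulChar F ℂ), ‖w p.1‖ * ‖z p.2‖ =
      (∑ χ, ‖w χ‖) * ∑ ψ, ‖z ψ‖ - 1 := by
    rw [sum_erase_eq_sub (mem_univ _), sum_mul_sum, Fintype.sum_prod_type]
    simp [hw, hz]
  rw [sum_mul_sum_eq_sum_jacobiSum, ← add_sum_erase univ _ (mem_univ 1)]
  simp only [Prod.fst_one, Prod.snd_one, hw, hz, MulChar.one_apply_coe, jacobiSum_one_one, one_mul,
    add_sub_cancel_left]
  rw [← hmass, sum_mul]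
  refine norm_sum_le_of_le _ fun p hp ↦ ?_
  rw [norm_mul, norm_mul, norm_mul, norm_mul, norm_mulChar_coe, norm_mulChar_coe, mul_one, mul_one]
  gcongr
  exact norm_jacobiSum_le_sqrt (ne_of_mem_erase hp)

theorem exists_sum_mulChar_ne_zero [Fintype (MulChar F ℂ)] {w z : MulChar F ℂ → ℂ} (hw : w 1 = 1)
    (hz : z 1 = 1) (hF : 4 ≤ Fintype.card F)
    (hmass : ((∑ χ, ‖w χ‖) * ∑ ψ, ‖z ψ‖) ^ 2 < Fintype.card F) (u v : Fˣ) :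
    ∃ x : F, ∑ χ, w χ * χ (u * x) ≠ 0 ∧ ∑ ψ, z ψ * ψ (v * (1 - x)) ≠ 0 := by
  by_contra! hzero
  set q : ℝ := (Fintype.card F : ℝ) with hq
  have hq4 : (4 : ℝ) ≤ q := by rw [hq]; exact_mod_cast hF
  have hsum : ∑ x, (∑ χ, w χ * χ (u * x)) * ∑ ψ, z ψ * ψ (v * (1 - x)) = 0 :=
    sum_eq_zero fun x _ ↦ mul_eq_zero.mpr (or_iff_not_imp_left.mpr (hzero x))
  set M := (∑ χ, ‖w χ‖) * ∑ ψ, ‖z ψ‖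
  have hM : M < √q := Real.lt_sqrt_of_sq_lt hmass
  have htwo : 2 ≤ √q := Real.le_sqrt_of_sq_le (by linarith)
  refine lt_irrefl (q - 2) ?_
  calc q - 2 = ((Fintype.card F : ℂ) - 2).re := by simp [hq]
    _ ≤ ‖(Fintype.card F : ℂ) - 2‖ := Complex.re_le_norm _
    _ ≤ (M - 1) * √q := by
        simpa only [hsum, zero_sub, norm_neg] using norm_sum_mul_sum_sub_le hw hz u v
    _ < (√q - 1) * √q := by gcongr
    _ = q - √q := by rw [sub_mul, Real.mul_self_sqrt (by linarith), one_mul]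
    _ ≤ q - 2 := by gcongr

end Character

/-- Every prime power `q ≥ 4` with `q > W(q-1)⁴` lies in `𝒢`, where
`W(n) = 2^(number of distinct prime factors of n)`. -/
theorem memG_of_gt_W_pow_four (q : ℕ) (hq : IsPrimePow q) (hq4 : 4 ≤ q)
    (h : (2 ^ (q - 1).primeFactors.card) ^ 4 < q) : memG q := by
  refine ⟨hq, fun F _ _ hF a c ha hc ↦ ?_⟩
  subst hF
  have : Fintype (MulChar F ℂ) := Fintype.ofFinite _
  have hmass : ∑ χ : MulChar F ℂ, ‖vinogradovWeight χ‖ =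
      2 ^ #(Fintype.card F - 1).primeFactors := by
    rw [sum_norm_vinogradovWeight, ← Nat.card_eq_fintype_card, natCard_mulChar]
  obtain ⟨x, hx, hx'⟩ := exists_sum_mulChar_ne_zero (w := vinogradovWeight)
    (z := vinogradovWeight) vinogradovWeight_one vinogradovWeight_one hq4
    (by rw [hmass, ← sq, ← pow_mul]; exact_mod_cast h)
    (Units.mk0 (a / c) (div_ne_zero ha hc)) (Units.mk0 a ha)
  refine ⟨a / c * x, orderOf_eq_card_sub_one_of_sum_ne_zero hx, ?_⟩
  rw [show a - c * (a / c * x) = a * (1 - x) by field_simp]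
  exact orderOf_eq_card_sub_one_of_sum_ne_zero hx'
end

section
/- Every prime power q with ω(q−1) ≥ 16 lies in G. -/
/-! Normalised to mean value `1`, the indicator function of the generators of `Fˣ` is the product,
over the primes `p ∣ q - 1`, of the normalised indicator functions of the non-`p`-th powers. Each
factor is `1` minus the average of the `p - 1` characters of order `p`, so its character
coefficients have absolute values summing to `2`, and those of the product to at most `2 ^ ω` with
`ω = ω(q - 1)`. Substituting `y = c * g / a` turns the weighted count of pairs of primitive roots
`g`, `a - c * g` into a combination of Jacobi sums. The pair of trivial characters contributes
`q - 2`, and all other Jacobi sums are at most `√q` in absolute value, so a pair exists once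
`4 ^ ω * √q < q - 2`. If `ω ≥ 16` this holds because `q` exceeds the product of `ω` distinct primes:
the first sixteen have product at least `3 / 2 * 16 ^ 16`, and all further ones exceed `16`.
-/

open Finset

section PrimeProducts

lemma prod_mul_pow_le_prod {ι M : Type*} [CommMonoid M] [PartialOrder M] [IsOrderedMonoid M]
    [DecidableEq ι] {s t : Finset ι} {f : ι → M} {b : M} {n : ℕ} (hst : #s = #t + n)
    (ht : ∀ i ∈ t \ s, f i ≤ b) (hs : ∀ i ∈ s \ t, b ≤ f i) :
    (∏ i ∈ t, f i) * b ^ n ≤ ∏ i ∈ s, f i := by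
  have hcard : #(s \ t) = #(t \ s) + n := by
    have h₁ := card_sdiff_add_card_inter s t
    have h₂ := card_sdiff_add_card_inter t s
    rw [inter_comm t s] at h₂
    omega
  calc (∏ i ∈ t, f i) * b ^ n
      = (∏ i ∈ t ∩ s, f i) * ((∏ i ∈ t \ s, f i) * b ^ n) := by
        rw [← prod_inter_mul_prod_sdiff t s, mul_assoc]
    _ ≤ (∏ i ∈ t ∩ s, f i) * (b ^ #(t \ s) * b ^ n) := by
        gcongr; exact prod_le_pow_card _ _ _ ht
    _ = (∏ i ∈ s ∩ t, f i) * b ^ #(s \ t) := by rw [inter_comm, hcard, pow_add]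
    _ ≤ (∏ i ∈ s ∩ t, f i) * ∏ i ∈ s \ t, f i := by
        gcongr; exact pow_card_le_prod _ _ _ hs
    _ = ∏ i ∈ s, f i := prod_inter_mul_prod_sdiff s t f

lemma primorial_mul_pow_le_prod {s : Finset ℕ} (hs : ∀ p ∈ s, p.Prime) {N k : ℕ}
    (hcard : #s = N.primeCounting + k) : primorial N * (N + 1) ^ k ≤ ∏ p ∈ s, p := by
  rw [primorial_eq_prod_primesLE]
  refine prod_mul_pow_le_prod (by rwa [Nat.primesLE_card_eq_primeCounting])
    (fun p hp ↦ ?_) fun p hp ↦ ?_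
  · exact (Nat.le_of_mem_primesLE (mem_sdiff.1 hp).1).trans N.le_succ
  · obtain ⟨hps, hpN⟩ := mem_sdiff.1 hp
    by_contra! hlt
    exact hpN (Nat.mem_primesLE.2 ⟨Nat.le_of_lt_succ hlt, hs p hps⟩)

lemma three_mul_sixteen_pow_card_le_two_mul_prod {s : Finset ℕ} (hs : ∀ p ∈ s, p.Prime)
    (h : 16 ≤ #s) : 3 * 16 ^ #s ≤ 2 * ∏ p ∈ s, p := by
  have hcount : Nat.primeCounting 53 = 16 := by decide +kernel
  have hprimorial : 3 * 16 ^ 16 ≤ 2 * primorial 53 := by decide +kernel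
  obtain ⟨k, hk⟩ := Nat.exists_eq_add_of_le h
  calc 3 * 16 ^ #s = 3 * 16 ^ 16 * 16 ^ k := by rw [hk, pow_add, mul_assoc]
    _ ≤ 2 * primorial 53 * 54 ^ k :=
      Nat.mul_le_mul hprimorial (Nat.pow_le_pow_left (by norm_num) k)
    _ ≤ 2 * ∏ p ∈ s, p := by
        rw [mul_assoc]
        gcongr
        exact primorial_mul_pow_le_prod hs (hcount ▸ hk)

lemma mul_sqrt_lt_sub_two {A q : ℝ} (hq : 12 ≤ q) (h : 3 * A ^ 2 ≤ 2 * q) :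
    A * √q < q - 2 := by
  refine lt_of_pow_lt_pow_left₀ 2 (by linarith) ?_
  rw [mul_pow, Real.sq_sqrt (by linarith)]
  nlinarith

end PrimeProducts

section Generators

variable {G : Type*} [Group G]

lemma orderOf_eq_natCard_iff [Finite G] {u : G} :
    orderOf u = Nat.card G ↔ ∀ p ∈ (Nat.card G).primeFactors, u ^ (Nat.card G / p) ≠ 1 := by
  refine ⟨fun h p hp ↦ ?_, fun h ↦ orderOf_eq_of_pow_and_pow_div_prime Nat.card_pos
    pow_card_eq_one' fun p hp hpd ↦ h p (Nat.mem_primeFactors.2 ⟨hp, hpd, Nat.card_pos.ne'⟩)⟩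
  have hprime := Nat.prime_of_mem_primeFactors hp
  refine pow_ne_one_of_lt_orderOf ?_ (h.symm ▸ Nat.div_lt_self Nat.card_pos hprime.one_lt)
  exact (Nat.div_pos (Nat.le_of_mem_primeFactors hp) hprime.pos).ne'

/-- The indicator function of the generators of a finite group `G`, normalised so that its mean
value is `1` if `G` is cyclic. -/
noncomputable def generatorWeight (u : G) : ℂ :=
  if orderOf u = Nat.card G then (Nat.card G : ℂ) / (Nat.card G).totient else 0

open Classical in
/-- For a prime `p` dividing the order of a finite cyclic group `G`, the indicator function of the
elements of `G` that are not `p`-th powers, normalised to have mean value `1`; the `p`-th powers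
are encoded as the elements killed by `Nat.card G / p`. -/
noncomputable def nonPowerWeight (p : ℕ) (u : G) : ℂ :=
  if u ^ (Nat.card G / p) = 1 then 0 else (p : ℂ) / (p - 1)

lemma orderOf_eq_natCard_of_generatorWeight_ne_zero {u : G} (hu : generatorWeight u ≠ 0) :
    orderOf u = Nat.card G :=
  of_not_not fun h ↦ hu (if_neg h)

lemma cast_div_totient_eq_prod {K : Type*} [Field K] [CharZero K] {n : ℕ} (hn : n ≠ 0) :
    (n : K) / n.totient = ∏ p ∈ n.primeFactors, (p : K) / (p - 1) := by
  have hcast : ∀ p ∈ n.primeFactors, ((p - 1 : ℕ) : K) = p - 1 := fun p hp ↦ by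
    rw [Nat.cast_sub (Nat.prime_of_mem_primeFactors hp).one_le, Nat.cast_one]
  have hne : ∏ p ∈ n.primeFactors, ((p : K) - 1) ≠ 0 := prod_ne_zero_iff.2 fun p hp ↦
    sub_ne_zero.2 <| Nat.cast_ne_one.2 (Nat.prime_of_mem_primeFactors hp).ne_one
  rw [prod_div_distrib, div_eq_div_iff (by simpa using hn) hne, ← prod_congr rfl hcast]
  rw [mul_comm (∏ _ ∈ _, _)]
  simpa only [Nat.cast_mul, Nat.cast_prod] using
    (congrArg (Nat.cast (R := K)) (Nat.totient_mul_prod_primeFactors n)).symm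

lemma generatorWeight_eq_prod_nonPowerWeight [Finite G] (u : G) :
    generatorWeight u = ∏ p ∈ (Nat.card G).primeFactors, nonPowerWeight p u := by
  by_cases h : orderOf u = Nat.card G
  · rw [generatorWeight, if_pos h, cast_div_totient_eq_prod Nat.card_pos.ne']
    exact prod_congr rfl fun p hp ↦ (if_neg (orderOf_eq_natCard_iff.1 h p hp)).symm
  · obtain ⟨p, hp, hu⟩ : ∃ p ∈ (Nat.card G).primeFactors, u ^ (Nat.card G / p) = 1 := by
      by_contra! hu
      exact h (orderOf_eq_natCard_iff.2 hu)
    rw [generatorWeight, if_neg h]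
    exact (prod_eq_zero hp (show nonPowerWeight p u = 0 from if_pos hu)).symm

lemma sum_generatorWeight [Fintype G] [IsCyclic G] :
    ∑ u : G, generatorWeight u = Nat.card G := by
  simp only [generatorWeight]
  rw [← sum_filter, sum_const, Nat.card_eq_fintype_card, IsCyclic.card_orderOf_eq_totient dvd_rfl,
    nsmul_eq_mul]
  exact mul_div_cancel₀ _ (by simp)

end Generators

section Characters

variable {R : Type*} [CommMonoid R]

lemma norm_mulChar_apply_units [Finite Rˣ] {K : Type*} [NormedField K] (χ : MulChar R K)
    (u : Rˣ) : ‖χ u‖ = 1 :=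
  ((χ.toMonoidHom.comp (Units.coeHom R)).isOfFinOrder (isOfFinOrder_of_finite u)).norm_eq_one

lemma orderOf_mulChar_apply {R' : Type*} [CommMonoidWithZero R'] (χ : MulChar R R') {g : Rˣ}
    (hg : ∀ u, u ∈ Subgroup.zpowers g) : orderOf (χ g) = orderOf χ := by
  refine orderOf_eq_orderOf_iff.2 fun n ↦ ?_
  rw [← MulChar.pow_apply_coe, MulChar.eq_iff hg, MulChar.one_apply_coe]

lemma mulChar_apply_eq_one_iff [Finite Rˣ] [IsCyclic Rˣ] {R' : Type*} [CommMonoidWithZero R']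
    (χ : MulChar R R') (u : Rˣ) : χ u = 1 ↔ u ^ (Nat.card Rˣ / orderOf χ) = 1 := by
  obtain ⟨g, hg⟩ := IsCyclic.exists_generator (α := Rˣ)
  obtain ⟨k, rfl⟩ := (Submonoid.mem_powers_iff _ _).1 (mem_powers_iff_mem_zpowers.2 (hg u))
  have hgcard : orderOf g = Nat.card Rˣ := orderOf_eq_card_of_forall_mem_zpowers hg
  obtain ⟨m, hm⟩ : orderOf χ ∣ Nat.card Rˣ := by
    rw [← orderOf_mulChar_apply χ hg, ← hgcard]
    exact orderOf_map_dvd (χ.toMonoidHom.comp (Units.coeHom R)) g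
  have hpos : 0 < orderOf χ * m := hm ▸ Nat.card_pos
  rw [hm, Nat.mul_div_cancel_left m (Nat.pos_of_mul_pos_right hpos), Units.val_pow_eq_pow_val,
    map_pow, ← pow_mul, ← orderOf_dvd_iff_pow_eq_one, ← orderOf_dvd_iff_pow_eq_one,
    orderOf_mulChar_apply χ hg, hgcard, hm,
    Nat.mul_dvd_mul_iff_right (Nat.pos_of_mul_pos_left hpos)]

variable [Finite Rˣ]

noncomputable instance fintypeMulChar : Fintype (MulChar R ℂ) := Fintype.ofFinite _

/-- The linear combination of the multiplicative characters of `R` with coefficients `w`, as a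
function on `R`; it vanishes outside `Rˣ`. -/
noncomputable def charSum (w : MulChar R ℂ → ℂ) (x : R) : ℂ := ∑ χ, w χ * χ x

/-- The function `f` on `Rˣ` is a linear combination of multiplicative characters whose
coefficients have absolute values summing to at most `A`. -/
def HasCharExpansion (f : Rˣ → ℂ) (A : ℝ) : Prop :=
  ∃ w : MulChar R ℂ → ℂ, (∀ u : Rˣ, charSum w u = f u) ∧ ∑ χ, ‖w χ‖ ≤ A

lemma sum_units_mulChar {R : Type*} [CommMonoid R] [Fintype Rˣ] (χ : MulChar R ℂ)
    [Decidable (χ = 1)] : ∑ u : Rˣ, χ u = if χ = 1 then (Nat.card Rˣ : ℂ) else 0 := by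
  split_ifs with h
  · simp [h]
  · refine sum_hom_units_eq_zero (χ.toMonoidHom.comp (Units.coeHom R)) fun h1 ↦ h ?_
    exact MulChar.eq_one_iff.2 fun u ↦ DFunLike.congr_fun h1 u

lemma sum_units_charSum {R : Type*} [CommMonoid R] [Fintype Rˣ] (w : MulChar R ℂ → ℂ) :
    ∑ u : Rˣ, charSum w u = Nat.card Rˣ * w 1 := by
  classical
  simp only [charSum]
  rw [sum_comm]
  simp only [← mul_sum, sum_units_mulChar, mul_ite, mul_zero, sum_ite_eq', mem_univ, if_true,
    mul_comm]

lemma isUnit_of_charSum_ne_zero {w : MulChar R ℂ → ℂ} {x : R} (hx : charSum w x ≠ 0) :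
    IsUnit x := by
  by_contra h
  exact hx (sum_eq_zero fun χ _ ↦ by rw [χ.map_nonunit h, mul_zero])

namespace HasCharExpansion

variable {f g : Rˣ → ℂ} {A B : ℝ}

lemma mulChar (χ : MulChar R ℂ) : HasCharExpansion (fun u : Rˣ ↦ χ u) 1 := by
  classical
  refine ⟨Pi.single χ 1, fun u ↦ ?_, ?_⟩ <;> simp [charSum, Pi.single_apply, apply_ite]

lemma one : HasCharExpansion (fun _ : Rˣ ↦ 1) 1 := by
  simpa using mulChar (1 : MulChar R ℂ)

lemma zero : HasCharExpansion (fun _ : Rˣ ↦ 0) 0 :=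
  ⟨0, by simp [charSum], by simp⟩

lemma add (hf : HasCharExpansion f A) (hg : HasCharExpansion g B) :
    HasCharExpansion (fun u ↦ f u + g u) (A + B) := by
  obtain ⟨w, hwf, hwA⟩ := hf
  obtain ⟨v, hvg, hvB⟩ := hg
  refine ⟨w + v, fun u ↦ ?_, ?_⟩
  · simp [← hwf, ← hvg, charSum, add_mul, sum_add_distrib]
  · calc ∑ χ, ‖w χ + v χ‖ ≤ ∑ χ, (‖w χ‖ + ‖v χ‖) := sum_le_sum fun χ _ ↦ norm_add_le _ _
      _ = ∑ χ, ‖w χ‖ + ∑ χ, ‖v χ‖ := sum_add_distrib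
      _ ≤ A + B := add_le_add hwA hvB

lemma const_mul (c : ℂ) (hf : HasCharExpansion f A) :
    HasCharExpansion (fun u ↦ c * f u) (‖c‖ * A) := by
  obtain ⟨w, hwf, hwA⟩ := hf
  refine ⟨fun χ ↦ c * w χ, fun u ↦ ?_, ?_⟩
  · simp only [← hwf, charSum, mul_sum, mul_assoc]
  · simp only [norm_mul, ← mul_sum]
    gcongr

lemma sum {ι : Type*} (s : Finset ι) {f : ι → Rˣ → ℂ} {A : ι → ℝ}
    (h : ∀ i ∈ s, HasCharExpansion (f i) (A i)) :
    HasCharExpansion (fun u ↦ ∑ i ∈ s, f i u) (∑ i ∈ s, A i) := by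
  classical
  induction s using Finset.induction_on with
  | empty => simpa using zero
  | insert i s hi ih =>
    simp only [sum_insert hi]
    exact (h i (mem_insert_self i s)).add (ih fun j hj ↦ h j (mem_insert_of_mem hj))

lemma mul (hf : HasCharExpansion f A) (hg : HasCharExpansion g B) :
    HasCharExpansion (fun u ↦ f u * g u) (A * B) := by
  obtain ⟨w, hwf, hwA⟩ := hf
  obtain ⟨v, hvg, hvB⟩ := hg
  refine ⟨fun χ ↦ ∑ ψ, w ψ * v (ψ⁻¹ * χ), fun u ↦ ?_, ?_⟩
  · simp only [← hwf, ← hvg, charSum, sum_mul]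
    rw [sum_comm]
    refine sum_congr rfl fun ψ _ ↦ ?_
    rw [mul_sum]
    refine (Fintype.sum_equiv (Equiv.mulLeft ψ) _ _ fun χ ↦ ?_).symm
    rw [Equiv.coe_mulLeft, inv_mul_cancel_left, MulChar.mul_apply]
    ring
  · calc ∑ χ, ‖∑ ψ, w ψ * v (ψ⁻¹ * χ)‖
        ≤ ∑ χ, ∑ ψ, ‖w ψ‖ * ‖v (ψ⁻¹ * χ)‖ := sum_le_sum fun χ _ ↦ by
          simpa only [norm_mul] using norm_sum_le univ fun ψ ↦ w ψ * v (ψ⁻¹ * χ)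
      _ = (∑ ψ, ‖w ψ‖) * ∑ χ, ‖v χ‖ := by
          rw [sum_comm, sum_mul]
          refine sum_congr rfl fun ψ _ ↦ ?_
          rw [← mul_sum]
          congr 1
          exact Fintype.sum_equiv (Equiv.mulLeft ψ⁻¹) _ _ fun χ ↦ rfl
      _ ≤ A * B := by gcongr; exact (by positivity : (0 : ℝ) ≤ _).trans hwA

lemma prod {ι : Type*} (s : Finset ι) {f : ι → Rˣ → ℂ} {A : ι → ℝ}
    (h : ∀ i ∈ s, HasCharExpansion (f i) (A i)) :
    HasCharExpansion (fun u ↦ ∏ i ∈ s, f i u) (∏ i ∈ s, A i) := by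
  classical
  induction s using Finset.induction_on with
  | empty => simpa using one
  | insert i s hi ih =>
    simp only [prod_insert hi]
    exact (h i (mem_insert_self i s)).mul (ih fun j hj ↦ h j (mem_insert_of_mem hj))

end HasCharExpansion

lemma sum_range_pow_succ_of_pow_eq_one {K : Type*} [Field K] {p : ℕ} (hp : p ≠ 0) {z : K}
    (hz : z ^ p = 1) (hz1 : z ≠ 1) : ∑ i ∈ range (p - 1), z ^ (i + 1) = -1 := by
  obtain ⟨n, rfl⟩ := Nat.exists_eq_succ_of_ne_zero hp
  have hgeom : ∑ i ∈ range (n + 1), z ^ i = 0 := by rw [geom_sum_eq hz1, hz, sub_self, zero_div]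
  rw [sum_range_succ', pow_zero] at hgeom
  exact eq_neg_of_add_eq_zero_left hgeom

lemma nonPowerWeight_eq_one_sub_sum [IsCyclic Rˣ] {χ : MulChar R ℂ} {p : ℕ} (hp : p.Prime)
    (hχ : orderOf χ = p) (u : Rˣ) :
    nonPowerWeight p u = 1 + -(1 / ((p : ℂ) - 1)) * ∑ i ∈ range (p - 1), (χ ^ (i + 1)) u := by
  have hp1 : (p : ℂ) - 1 ≠ 0 := sub_ne_zero.2 (Nat.cast_ne_one.2 hp.ne_one)
  have hχu : χ u ^ p = 1 := by
    rw [← MulChar.pow_apply_coe, ← hχ, pow_orderOf_eq_one, MulChar.one_apply_coe]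
  simp only [MulChar.pow_apply_coe]
  rw [nonPowerWeight, ← hχ, ← mulChar_apply_eq_one_iff, hχ]
  split_ifs with h
  · simp [h, Nat.cast_sub hp.one_le, hp1]
  · rw [sum_range_pow_succ_of_pow_eq_one hp.ne_zero hχu h]
    field_simp
    ring

lemma hasCharExpansion_nonPowerWeight [IsCyclic Rˣ] {χ : MulChar R ℂ} {p : ℕ} (hp : p.Prime)
    (hχ : orderOf χ = p) : HasCharExpansion (fun u : Rˣ ↦ nonPowerWeight p u) 2 := by
  have hp1 : (0 : ℝ) < p - 1 := sub_pos.2 (Nat.one_lt_cast.2 hp.one_lt)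
  have hnorm : 1 + ‖-(1 / ((p : ℂ) - 1))‖ * ∑ _i ∈ range (p - 1), (1 : ℝ) = 2 := by
    have hnorm_sub : ‖(p : ℂ) - 1‖ = p - 1 := by
      rw [← abs_of_pos hp1, ← Real.norm_eq_abs, ← Complex.norm_real]
      push_cast
      rfl
    rw [norm_neg, norm_div, norm_one, hnorm_sub, sum_const, card_range, nsmul_one,
      Nat.cast_sub hp.one_le, Nat.cast_one, one_div_mul_cancel hp1.ne', one_add_one_eq_two]
  simp only [nonPowerWeight_eq_one_sub_sum hp hχ]
  exact hnorm ▸ HasCharExpansion.one.add ((HasCharExpansion.sum _ fun i _ ↦ .mulChar _).const_mul _)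

end Characters

section FiniteField

variable {F : Type*} [Field F]

lemma hasCharExpansion_generatorWeight [Finite F] :
    HasCharExpansion (generatorWeight : Fˣ → ℂ) (2 ^ #(Nat.card Fˣ).primeFactors) := by
  have := Fintype.ofFinite F
  simp only [← prod_const, funext generatorWeight_eq_prod_nonPowerWeight]
  refine HasCharExpansion.prod _ fun p hp ↦ ?_
  have hprime := Nat.prime_of_mem_primeFactors hp
  obtain ⟨χ, hχ⟩ := MulChar.exists_mulChar_orderOf F (n := p)
    (by simpa [Nat.card_units] using Nat.dvd_of_mem_primeFactors hp)
    (Complex.isPrimitiveRoot_exp p hprime.ne_zero)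
  exact hasCharExpansion_nonPowerWeight hprime hχ

variable [Fintype F]

lemma norm_jacobiSum_of_mul_ne_one {χ φ : MulChar F ℂ} (hχ : χ ≠ 1) (hφ : φ ≠ 1)
    (hχφ : χ * φ ≠ 1) : ‖jacobiSum χ φ‖ = √(Fintype.card F) := by
  have hchar : ringChar ℂ ≠ ringChar F := by
    rw [ringChar.eq_zero]
    exact (CharP.ringChar_ne_zero_of_finite F).symm
  have hconj : jacobiSum χ⁻¹ φ⁻¹ = starRingEnd ℂ (jacobiSum χ φ) := by
    simp only [jacobiSum, map_sum, map_mul, ← MulChar.star_apply', RCLike.star_def]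
  have hmul := jacobiSum_mul_jacobiSum_inv hchar hχ hφ hχφ
  rw [hconj, Complex.mul_conj, Complex.normSq_eq_norm_sq] at hmul
  rw [← Real.sqrt_sq (norm_nonneg (jacobiSum χ φ))]
  congr 1
  exact_mod_cast hmul

lemma norm_jacobiSum_le {χ φ : MulChar F ℂ} (h : ¬(χ = 1 ∧ φ = 1)) :
    ‖jacobiSum χ φ‖ ≤ √(Fintype.card F) := by
  have hone : 1 ≤ √(Fintype.card F : ℝ) :=
    Real.one_le_sqrt.2 (Nat.one_le_cast.2 Fintype.card_pos)
  rcases eq_or_ne χ 1 with rfl | hχ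
  · rwa [jacobiSum_one_nontrivial (by simpa using h), norm_neg, norm_one]
  rcases eq_or_ne φ 1 with rfl | hφ
  · rwa [jacobiSum_comm, jacobiSum_one_nontrivial hχ, norm_neg, norm_one]
  rcases eq_or_ne (χ * φ) 1 with hχφ | hχφ
  · rwa [← inv_eq_of_mul_eq_one_right hχφ, jacobiSum_nontrivial_inv hχ, norm_neg,
      ← Units.val_one, ← Units.val_neg, norm_mulChar_apply_units]
  · exact (norm_jacobiSum_of_mul_ne_one hχ hφ hχφ).le

lemma sum_charSum_mul_charSum (w v : MulChar F ℂ → ℂ) (a b : F) :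
    ∑ y, charSum w (a * y) * charSum v (b * (1 - y)) =
      ∑ χ : MulChar F ℂ × MulChar F ℂ,
        w χ.1 * v χ.2 * (χ.1 a * χ.2 b * jacobiSum χ.1 χ.2) := by
  calc ∑ y, charSum w (a * y) * charSum v (b * (1 - y))
      = ∑ y, ∑ χ : MulChar F ℂ × MulChar F ℂ,
          w χ.1 * χ.1 (a * y) * (v χ.2 * χ.2 (b * (1 - y))) := by
        simp only [charSum, sum_mul_sum, Fintype.sum_prod_type]
    _ = ∑ χ : MulChar F ℂ × MulChar F ℂ, ∑ y,
          w χ.1 * χ.1 (a * y) * (v χ.2 * χ.2 (b * (1 - y))) := sum_comm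
    _ = _ := Fintype.sum_congr _ _ fun χ ↦ by
        rw [jacobiSum, mul_sum, mul_sum]
        refine Fintype.sum_congr _ _ fun y ↦ ?_
        rw [map_mul, map_mul]
        ring

lemma norm_sum_charSum_mul_charSum_sub_le (w v : MulChar F ℂ → ℂ) (a b : Fˣ) :
    ‖∑ y, charSum w (a * y) * charSum v (b * (1 - y)) - w 1 * v 1 * (Fintype.card F - 2)‖ ≤
      (∑ χ, ‖w χ‖) * (∑ χ, ‖v χ‖) * √(Fintype.card F) := by
  classical
  rw [sum_charSum_mul_charSum, ← add_sum_erase _ _ (mem_univ (1, 1))]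
  simp only [MulChar.one_apply_coe, one_mul, jacobiSum_one_one, add_sub_cancel_left]
  calc _ ≤ ∑ χ ∈ univ.erase ((1, 1) : MulChar F ℂ × MulChar F ℂ),
          ‖w χ.1‖ * ‖v χ.2‖ * √(Fintype.card F) := by
        refine (norm_sum_le _ _).trans (sum_le_sum fun χ hχ ↦ ?_)
        simp only [norm_mul, norm_mulChar_apply_units, one_mul]
        gcongr
        exact norm_jacobiSum_le fun h ↦ ne_of_mem_erase hχ (Prod.ext h.1 h.2)
    _ ≤ ∑ χ : MulChar F ℂ × MulChar F ℂ, ‖w χ.1‖ * ‖v χ.2‖ * √(Fintype.card F) :=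
        sum_le_sum_of_subset_of_nonneg (erase_subset _ _) fun _ _ _ ↦ by positivity
    _ = _ := by rw [← sum_mul, Fintype.sum_prod_type, sum_mul_sum]

lemma HasCharExpansion.exists_mul_add_mul_eq [Fintype Fˣ] {f g : Fˣ → ℂ} {A B : ℝ}
    (hf : HasCharExpansion f A) (hg : HasCharExpansion g B) (hfmean : ∑ u, f u = Nat.card Fˣ)
    (hgmean : ∑ u, g u = Nat.card Fˣ)
    (hAB : A * B * √(Fintype.card F) < Fintype.card F - 2) (a b c : Fˣ) :
    ∃ u v : Fˣ, f u ≠ 0 ∧ g v ≠ 0 ∧ (b * u + c * v : F) = a := by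
  obtain ⟨w, hwf, hwA⟩ := hf
  obtain ⟨v, hvg, hvB⟩ := hg
  have hcard : (Nat.card Fˣ : ℂ) ≠ 0 := Nat.cast_ne_zero.2 Nat.card_pos.ne'
  have hw : w 1 = 1 := by
    rwa [← sum_congr rfl fun u _ ↦ hwf u, sum_units_charSum, mul_eq_left₀ hcard] at hfmean
  have hv : v 1 = 1 := by
    rwa [← sum_congr rfl fun u _ ↦ hvg u, sum_units_charSum, mul_eq_left₀ hcard] at hgmean
  have hsum : ∑ y, charSum w (↑(a / b) * y) * charSum v (↑(a / c) * (1 - y)) ≠ 0 := fun hzero ↦ by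
    have hbound := norm_sum_charSum_mul_charSum_sub_le w v (a / b) (a / c)
    rw [hzero, hw, hv, zero_sub, norm_neg, one_mul, one_mul] at hbound
    refine hAB.not_ge ?_
    calc (Fintype.card F - 2 : ℝ) = ((Fintype.card F : ℂ) - 2).re := by simp
      _ ≤ ‖(Fintype.card F : ℂ) - 2‖ := Complex.re_le_norm _
      _ ≤ (∑ χ, ‖w χ‖) * (∑ χ, ‖v χ‖) * √(Fintype.card F) := hbound
      _ ≤ A * B * √(Fintype.card F) := by
        gcongr
        exact (by positivity : (0 : ℝ) ≤ _).trans hwA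
  obtain ⟨y, -, hy⟩ := exists_ne_zero_of_sum_ne_zero hsum
  obtain ⟨hyw, hyv⟩ := mul_ne_zero_iff.1 hy
  obtain ⟨u, hu⟩ := isUnit_of_charSum_ne_zero hyw
  obtain ⟨z, hz⟩ := isUnit_of_charSum_ne_zero hyv
  refine ⟨u, z, by rwa [← hwf, hu], by rwa [← hvg, hz], ?_⟩
  rw [hu, hz, Units.val_div_eq_div_val, Units.val_div_eq_div_val]
  field_simp
  ring

theorem exists_orderOf_eq_and_orderOf_sub_mul_eq
    (hF : 4 ^ #(Fintype.card F - 1).primeFactors * √(Fintype.card F) < Fintype.card F - 2)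
    {a c : F} (ha : a ≠ 0) (hc : c ≠ 0) :
    ∃ g : F, orderOf g = Fintype.card F - 1 ∧ orderOf (a - c * g) = Fintype.card F - 1 := by
  have := Fintype.ofFinite Fˣ
  have hcard : Nat.card Fˣ = Fintype.card F - 1 := by
    rw [Nat.card_units, Nat.card_eq_fintype_card]
  obtain ⟨u, v, hu, hv, huv⟩ := (hasCharExpansion_generatorWeight (F := F)).exists_mul_add_mul_eq
    hasCharExpansion_generatorWeight sum_generatorWeight sum_generatorWeight
    (by rwa [← mul_pow, hcard, (by norm_num : (2 * 2 : ℝ) = 4)]) (Units.mk0 a ha) (Units.mk0 c hc) 1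
  have hv_eq : a - c * u = v := by
    rw [sub_eq_iff_eq_add']
    simpa using huv.symm
  rw [← hcard]
  refine ⟨u, ?_, ?_⟩
  · rw [orderOf_units]
    exact orderOf_eq_natCard_of_generatorWeight_ne_zero hu
  · rw [hv_eq, orderOf_units]
    exact orderOf_eq_natCard_of_generatorWeight_ne_zero hv

end FiniteField

/-- Every prime power `q` such that `q - 1` has at least `16` distinct prime factors
lies in `𝒢`. -/
theorem memG_of_omega_ge_sixteen (q : ℕ) (hq : IsPrimePow q)
    (h : 16 ≤ (q - 1).primeFactors.card) : memG q := by
  refine ⟨hq, fun F _ _ hF a c ha hc ↦ ?_⟩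
  subst hF
  set q := Fintype.card F
  have hprod := three_mul_sixteen_pow_card_le_two_mul_prod
    (fun p hp ↦ Nat.prime_of_mem_primeFactors hp) h
  have hle : ∏ p ∈ (q - 1).primeFactors, p ≤ q - 1 :=
    Nat.le_of_dvd (Nat.sub_pos_of_lt hq.one_lt) (Nat.prod_primeFactors_dvd _)
  have hlarge : 3 * 16 ^ #(q - 1).primeFactors ≤ 2 * q := by omega
  have hq12 : 12 ≤ q := by
    have := Nat.pow_le_pow_right (n := 16) (by norm_num) h
    omega
  refine exists_orderOf_eq_and_orderOf_sub_mul_eq (mul_sqrt_lt_sub_two ?_ ?_) ha hc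
  · exact_mod_cast hq12
  · rw [pow_right_comm]
    norm_num
    exact_mod_cast hlarge
end

section
/- Every prime power q with q > 2^60 lies in G. -/
/-!
Fix characters `χ_p` of order `p`, one for each prime `p ∣ q - 1`. An element `x ≠ 0` is a primitive
root as soon as `χ_p x ≠ 1` for all `p`, so expanding `∏_p (1 - p⁻¹ ∑_{j < p} χ_p ^ j)` gives a
linear combination `f` of multiplicative characters that vanishes off the primitive roots. In
`∑_x f x * f (a - c x)` each pair of characters contributes a Jacobi sum: the trivial pair
contributes the square of the trivial coefficient times `q - 2`, and the Jacobi sums of all other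
pairs are at most `√q` in absolute value. The absolute values of the coefficients of `f` add up to
`2 ^ ω(q - 1)` times the trivial one, so the sum is nonzero once `16 ^ ω(q - 1) ≤ q` and `q > 2`. If
`ω(q - 1) ≤ 15` this holds because `16 ^ 15 = 2 ^ 60`; otherwise it holds because the product of
the first sixteen primes exceeds `16 ^ 16` and every further prime exceeds `16`, which puts
`16 ^ ω(q - 1)` below the product of the primes dividing `q - 1`.
-/

open Finset

section Groups

lemma exists_pow_eq_of_pow_card_div_eq_one {G : Type*} [Group G] [IsCyclic G] [Finite G] {d : ℕ}
    (hd : d ∣ Nat.card G) {x : G} (hx : x ^ (Nat.card G / d) = 1) : ∃ y, y ^ d = x := by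
  obtain ⟨g, hg⟩ := IsCyclic.exists_generator (α := G)
  obtain ⟨k, rfl⟩ := mem_powers_iff_mem_zpowers.mpr (hg x)
  obtain ⟨m, hm⟩ := hd
  have hdm : 0 < d * m := hm ▸ Nat.card_pos
  simp only [hm, Nat.mul_div_cancel_left m (Nat.pos_of_mul_pos_right hdm), ← pow_mul] at hx
  rw [← orderOf_dvd_iff_pow_eq_one, orderOf_eq_card_of_forall_mem_zpowers hg, hm] at hx
  obtain ⟨l, rfl⟩ := Nat.dvd_of_mul_dvd_mul_right (Nat.pos_of_mul_pos_left hdm) hx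
  exact ⟨g ^ l, by rw [← pow_mul, mul_comm]⟩

lemma eq_one_of_prod_eq_one_of_coprime_orderOf {ι M : Type*} [CommMonoid M] {s : Finset ι}
    {x : ι → M} (hx : (s : Set ι).Pairwise fun i j ↦ (orderOf (x i)).Coprime (orderOf (x j)))
    (h : ∏ i ∈ s, x i = 1) {i : ι} (hi : i ∈ s) : x i = 1 := by
  classical
  set m := ∏ j ∈ s.erase i, orderOf (x j)
  have hothers : ∏ j ∈ s.erase i, x j ^ m = 1 := prod_eq_one fun j hj ↦
    orderOf_dvd_iff_pow_eq_one.mp (dvd_prod_of_mem (fun j ↦ orderOf (x j)) hj)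
  have hpow : x i ^ m = 1 :=
    calc x i ^ m = x i ^ m * ∏ j ∈ s.erase i, x j ^ m := by rw [hothers, mul_one]
      _ = (∏ j ∈ s, x j) ^ m := by rw [mul_prod_erase s (x · ^ m) hi, prod_pow]
      _ = 1 := by rw [h, one_pow]
  have hcop : (orderOf (x i)).Coprime m := Nat.Coprime.prod_right fun j hj ↦
    hx hi (mem_of_mem_erase hj) (ne_of_mem_erase hj).symm
  exact orderOf_eq_one_iff.mp (hcop.eq_one_of_dvd (orderOf_dvd_of_pow_eq_one hpow))

end Groups

section MulChar

lemma mulChar_prod_apply {ι R R' : Type*} [CommMonoid R] [CommMonoidWithZero R'] (s : Finset ι)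
    (χ : ι → MulChar R R') {x : R} (hx : IsUnit x) : (∏ i ∈ s, χ i) x = ∏ i ∈ s, χ i x := by
  classical
  induction s using Finset.induction_on with
  | empty => exact MulChar.one_apply hx
  | insert i s hi ih => rw [prod_insert hi, prod_insert hi, MulChar.mul_apply, ih]

lemma norm_mulChar_apply_of_isUnit {R : Type*} [CommRing R] [Finite Rˣ] (χ : MulChar R ℂ)
    {x : R} (hx : IsUnit x) : ‖χ x‖ = 1 := by
  obtain ⟨u, rfl⟩ := hx
  have := Fintype.ofFinite Rˣ
  exact Complex.norm_eq_one_of_mem_rootsOfUnity (χ.apply_mem_rootsOfUnity u)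

lemma orderOf_eq_card_sub_one_of_mulChar_ne_one {F R : Type*} [Field F] [Fintype F]
    [CommMonoidWithZero R] {x : F} (hx : x ≠ 0)
    (h : ∀ p ∈ (Fintype.card F - 1).primeFactors, ∃ χ : MulChar F R, χ ^ p = 1 ∧ χ x ≠ 1) :
    orderOf x = Fintype.card F - 1 := by
  classical
  obtain ⟨u, rfl⟩ := hx.isUnit
  have hcard : Nat.card Fˣ = Fintype.card F - 1 := by
    rw [Nat.card_eq_fintype_card, Fintype.card_units]
  rw [orderOf_units, ← hcard]
  refine orderOf_eq_of_pow_and_pow_div_prime Nat.card_pos pow_card_eq_one' fun p hp hdvd hu ↦ ?_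
  obtain ⟨χ, hχ, hne⟩ := h p (Nat.mem_primeFactors.mpr
    (hcard ▸ ⟨hp, hdvd, Nat.card_pos.ne'⟩))
  obtain ⟨y, rfl⟩ := exists_pow_eq_of_pow_card_div_eq_one hdvd hu
  apply hne
  rw [Units.val_pow_eq_pow_val, map_pow, ← MulChar.pow_apply_coe, hχ, MulChar.one_apply_coe]

end MulChar

section JacobiSums

variable {F : Type*} [Field F] [Fintype F]

lemma star_jacobiSum {R : Type*} [CommRing R] [Fintype R] (χ ψ : MulChar R ℂ) :
    star (jacobiSum χ ψ) = jacobiSum χ⁻¹ ψ⁻¹ := by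
  simp only [jacobiSum, star_sum, star_mul', MulChar.star_apply']

lemma norm_jacobiSum_eq_sqrt_card {χ ψ : MulChar F ℂ} (hχ : χ ≠ 1) (hψ : ψ ≠ 1)
    (hχψ : χ * ψ ≠ 1) : ‖jacobiSum χ ψ‖ = √(Fintype.card F) := by
  have hchar : ringChar ℂ ≠ ringChar F := by
    rw [ringChar.eq_zero]
    exact (CharP.ringChar_ne_zero_of_finite F).symm
  have hmul := jacobiSum_mul_jacobiSum_inv hchar hχ hψ hχψ
  rw [← star_jacobiSum, Complex.star_def, Complex.mul_conj] at hmul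
  rw [Complex.norm_def]
  exact congrArg Real.sqrt (by exact_mod_cast hmul)

lemma norm_jacobiSum_le_sqrt_card {χ ψ : MulChar F ℂ} (h : ¬(χ = 1 ∧ ψ = 1)) :
    ‖jacobiSum χ ψ‖ ≤ √(Fintype.card F) := by
  have hone : (1 : ℝ) ≤ √(Fintype.card F) :=
    Real.one_le_sqrt.mpr (by exact_mod_cast Fintype.card_pos)
  by_cases hχ : χ = 1
  · rw [hχ, jacobiSum_one_nontrivial fun hψ ↦ h ⟨hχ, hψ⟩]
    simpa using hone
  by_cases hψ : ψ = 1
  · rw [hψ, jacobiSum_comm, jacobiSum_one_nontrivial hχ]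
    simpa using hone
  by_cases hχψ : χ * ψ = 1
  · rwa [eq_inv_of_mul_eq_one_right hχψ, jacobiSum_nontrivial_inv hχ, norm_neg,
      norm_mulChar_apply_of_isUnit χ isUnit_one.neg]
  · exact (norm_jacobiSum_eq_sqrt_card hχ hψ hχψ).le

lemma sum_mulChar_mul_mulChar_sub {R : Type*} [CommRing R] (χ ψ : MulChar F R) {a c : F}
    (ha : a ≠ 0) (hc : c ≠ 0) :
    ∑ x, χ x * ψ (a - c * x) = χ (a / c) * ψ a * jacobiSum χ ψ := by
  rw [jacobiSum, mul_sum, ← Equiv.sum_comp (Equiv.mulLeft₀ (a / c) (div_ne_zero ha hc))]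
  refine sum_congr rfl fun x _ ↦ ?_
  have hx : a - c * (a / c * x) = a * (1 - x) := by field_simp
  rw [Equiv.mulLeft₀_apply, hx, map_mul, map_mul]
  ring

end JacobiSums

section Correlation

variable {F : Type*} [Field F]

/-- The linear combination of the characters `χ i`, `i ∈ s`, with weights `w i`, as a function. -/
noncomputable def mulCharComb {ι : Type*} (s : Finset ι) (w : ι → ℂ) (χ : ι → MulChar F ℂ)
    (x : F) : ℂ :=
  ∑ i ∈ s, w i * χ i x

variable [Fintype F] {ι κ : Type*} {s : Finset ι} {t : Finset κ} {w : ι → ℂ} {v : κ → ℂ}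
  {χ : ι → MulChar F ℂ} {ψ : κ → MulChar F ℂ} {i₀ : ι} {j₀ : κ} {a c : F}

lemma sum_mulCharComb_mul_mulCharComb_sub (ha : a ≠ 0) (hc : c ≠ 0) :
    ∑ x, mulCharComb s w χ x * mulCharComb t v ψ (a - c * x) =
      ∑ p ∈ s ×ˢ t,
        w p.1 * v p.2 * (χ p.1 (a / c) * ψ p.2 a * jacobiSum (χ p.1) (ψ p.2)) := by
  simp only [mulCharComb, sum_mul_sum, ← sum_product' s t]
  rw [sum_comm]
  refine sum_congr rfl fun p _ ↦ ?_
  rw [← sum_mulChar_mul_mulChar_sub _ _ ha hc, mul_sum]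
  exact sum_congr rfl fun x _ ↦ by ring

lemma norm_sum_mulCharComb_sub_main_le (hi₀ : i₀ ∈ s) (hj₀ : j₀ ∈ t)
    (hχ : ∀ i ∈ s, χ i = 1 ↔ i = i₀) (hψ : ∀ j ∈ t, ψ j = 1 ↔ j = j₀) (ha : a ≠ 0) (hc : c ≠ 0) :
    ‖∑ x, mulCharComb s w χ x * mulCharComb t v ψ (a - c * x) -
        w i₀ * v j₀ * (Fintype.card F - 2)‖ ≤
      ((∑ i ∈ s, ‖w i‖) * (∑ j ∈ t, ‖v j‖) - ‖w i₀‖ * ‖v j₀‖) * √(Fintype.card F) := by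
  classical
  have hmem : (i₀, j₀) ∈ s ×ˢ t := mk_mem_product hi₀ hj₀
  have hac : IsUnit (a / c) := (div_ne_zero ha hc).isUnit
  have hmain : χ i₀ (a / c) * ψ j₀ a * jacobiSum (χ i₀) (ψ j₀) = Fintype.card F - 2 := by
    rw [(hχ i₀ hi₀).mpr rfl, (hψ j₀ hj₀).mpr rfl, jacobiSum_one_one, MulChar.one_apply hac,
      MulChar.one_apply ha.isUnit, one_mul, one_mul]
  have hmass : (∑ i ∈ s, ‖w i‖) * (∑ j ∈ t, ‖v j‖) - ‖w i₀‖ * ‖v j₀‖ =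
      ∑ p ∈ (s ×ˢ t).erase (i₀, j₀), ‖w p.1‖ * ‖v p.2‖ := by
    rw [sum_mul_sum, ← sum_product', ← add_sum_erase _ _ hmem, add_sub_cancel_left]
  rw [sum_mulCharComb_mul_mulCharComb_sub ha hc, ← add_sum_erase _ _ hmem, hmain,
    add_sub_cancel_left, hmass, sum_mul]
  refine norm_sum_le_of_le _ fun p hp ↦ ?_
  obtain ⟨hne, hp⟩ := mem_erase.mp hp
  obtain ⟨hp₁, hp₂⟩ := mem_product.mp hp
  have hJ : ‖jacobiSum (χ p.1) (ψ p.2)‖ ≤ √(Fintype.card F) := norm_jacobiSum_le_sqrt_card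
    fun h ↦ hne (Prod.ext ((hχ _ hp₁).mp h.1) ((hψ _ hp₂).mp h.2))
  rw [norm_mul, norm_mul, norm_mul, norm_mul, norm_mulChar_apply_of_isUnit _ hac,
    norm_mulChar_apply_of_isUnit _ ha.isUnit, one_mul, one_mul]
  gcongr

lemma sum_mulCharComb_mul_mulCharComb_sub_ne_zero (hi₀ : i₀ ∈ s) (hj₀ : j₀ ∈ t)
    (hχ : ∀ i ∈ s, χ i = 1 ↔ i = i₀) (hψ : ∀ j ∈ t, ψ j = 1 ↔ j = j₀) (hw : w i₀ ≠ 0)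
    (hv : v j₀ ≠ 0)
    (hmass : (∑ i ∈ s, ‖w i‖) * (∑ j ∈ t, ‖v j‖) ≤ √(Fintype.card F) * (‖w i₀‖ * ‖v j₀‖))
    (hF : 4 < Fintype.card F) (ha : a ≠ 0) (hc : c ≠ 0) :
    ∑ x, mulCharComb s w χ x * mulCharComb t v ψ (a - c * x) ≠ 0 := by
  intro hzero
  have hle := norm_sum_mulCharComb_sub_main_le (w := w) (v := v) hi₀ hj₀ hχ hψ ha hc
  rw [hzero, zero_sub, norm_neg, norm_mul, norm_mul] at hle
  set r := √(Fintype.card F : ℝ)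
  set b := ‖w i₀‖ * ‖v j₀‖
  have hb : 0 < b := mul_pos (norm_pos_iff.mpr hw) (norm_pos_iff.mpr hv)
  have hr : 2 < r := Real.lt_sqrt_of_sq_lt (by norm_num; exact_mod_cast hF)
  have hsq : r ^ 2 = Fintype.card F := Real.sq_sqrt (Nat.cast_nonneg _)
  have hcard : r ^ 2 - 2 ≤ ‖(Fintype.card F - 2 : ℂ)‖ := by
    simpa [hsq] using norm_sub_norm_le (Fintype.card F : ℂ) 2
  have hlt : b * (r * r - r) < b * (r ^ 2 - 2) :=
    mul_lt_mul_of_pos_left (by linarith [sq r]) hb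
  refine absurd hlt (not_lt.mpr ?_)
  calc b * (r ^ 2 - 2) ≤ b * ‖(Fintype.card F - 2 : ℂ)‖ := by gcongr
    _ ≤ ((∑ i ∈ s, ‖w i‖) * (∑ j ∈ t, ‖v j‖) - b) * r := hle
    _ ≤ (r * b - b) * r := by gcongr
    _ = b * (r * r - r) := by ring

end Correlation

section Sieve

/-- The coefficients `c_j` in the expansion `∑_{j < n} c_j ζ ^ j` of the indicator function of
`ζ ≠ 1` on the `n`-th roots of unity `ζ`. -/
noncomputable def neOneCoeff (n j : ℕ) : ℂ := (if j = 0 then 1 else 0) - (n : ℂ)⁻¹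

lemma neOneCoeff_zero_ne_zero {n : ℕ} (hn : n ≠ 1) : neOneCoeff n 0 ≠ 0 := by
  simpa [neOneCoeff, sub_eq_zero, eq_comm (a := (1 : ℂ))] using hn

lemma sum_neOneCoeff {n : ℕ} (hn : n ≠ 0) : ∑ j ∈ range n, neOneCoeff n j = 0 := by
  simp [neOneCoeff, sum_sub_distrib, hn, Nat.pos_of_ne_zero hn]

lemma sum_norm_neOneCoeff {n : ℕ} (hn : n ≠ 0) :
    ∑ j ∈ range n, ‖neOneCoeff n j‖ = 2 * ‖neOneCoeff n 0‖ := by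
  obtain ⟨k, rfl⟩ := Nat.exists_eq_succ_of_ne_zero hn
  have hzero : ‖neOneCoeff (k + 1) 0‖ = 1 - ((k + 1 : ℕ) : ℝ)⁻¹ := by
    have hreal : neOneCoeff (k + 1) 0 = ((1 - ((k + 1 : ℕ) : ℝ)⁻¹ : ℝ) : ℂ) := by
      simp [neOneCoeff]
    rw [hreal, Complex.norm_of_nonneg (sub_nonneg.mpr (Nat.cast_inv_le_one _))]
  have hsucc (j : ℕ) : ‖neOneCoeff (k + 1) (j + 1)‖ = ((k + 1 : ℕ) : ℝ)⁻¹ := by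
    rw [neOneCoeff, if_neg j.succ_ne_zero, zero_sub, norm_neg, norm_inv, Complex.norm_natCast]
  simp only [Nat.succ_eq_add_one, sum_range_succ', hzero, hsucc, sum_const, card_range,
    nsmul_eq_mul]
  push_cast
  field_simp
  ring

variable {F : Type*} [Field F] {ι κ : Type*} [Fintype ι] [Fintype κ]

/-- The exponent vectors of the products of powers of the characters `χ i`, reduced modulo their
orders. -/
noncomputable def sieveExponents (χ : ι → MulChar F ℂ) : Finset (ι → ℕ) :=
  open Classical in Fintype.piFinset fun i ↦ range (orderOf (χ i))

/-- The coefficient of `∏ i, χ i ^ e i` in `sieveSum χ`. -/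
noncomputable def sieveWeight (χ : ι → MulChar F ℂ) (e : ι → ℕ) : ℂ :=
  ∏ i, neOneCoeff (orderOf (χ i)) (e i)

/-- The expansion into characters of the indicator function of the set of all `x ≠ 0` with
`χ i x ≠ 1` for all `i`. -/
noncomputable def sieveSum (χ : ι → MulChar F ℂ) : F → ℂ :=
  mulCharComb (sieveExponents χ) (sieveWeight χ) fun e ↦ ∏ i, χ i ^ e i

variable {χ : ι → MulChar F ℂ} {ψ : κ → MulChar F ℂ}

lemma mem_sieveExponents {e : ι → ℕ} : e ∈ sieveExponents χ ↔ ∀ i, e i < orderOf (χ i) := by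
  simp only [sieveExponents, Fintype.mem_piFinset, mem_range]

lemma prod_pow_eq_one_iff_of_mem_sieveExponents
    (hχ : Pairwise fun i j ↦ (orderOf (χ i)).Coprime (orderOf (χ j))) {e : ι → ℕ}
    (he : e ∈ sieveExponents χ) : ∏ i, χ i ^ e i = 1 ↔ e = 0 := by
  refine ⟨fun h ↦ funext fun i ↦ ?_, fun h ↦ by simp [h]⟩
  have hcop : ((univ : Finset ι) : Set ι).Pairwise fun i j ↦
      (orderOf (χ i ^ e i)).Coprime (orderOf (χ j ^ e j)) := fun i _ j _ hij ↦
    (hχ hij).of_dvd (orderOf_pow_dvd _) (orderOf_pow_dvd _)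
  exact Nat.eq_zero_of_dvd_of_lt
    (orderOf_dvd_of_pow_eq_one (eq_one_of_prod_eq_one_of_coprime_orderOf hcop h (mem_univ i)))
    (mem_sieveExponents.mp he i)

lemma sieveWeight_zero_ne_zero (hχ : ∀ i, χ i ≠ 1) : sieveWeight χ 0 ≠ 0 :=
  prod_ne_zero_iff.mpr fun i _ ↦ neOneCoeff_zero_ne_zero (orderOf_eq_one_iff.not.mpr (hχ i))

lemma sieveSum_zero : sieveSum χ 0 = 0 :=
  sum_eq_zero fun e _ ↦ by rw [MulChar.map_zero, mul_zero]

lemma sieveSum_eq_prod {x : F} (hx : x ≠ 0) :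
    sieveSum χ x =
      ∏ i, ∑ j ∈ range (orderOf (χ i)), neOneCoeff (orderOf (χ i)) j * χ i x ^ j := by
  classical
  rw [prod_univ_sum, sieveSum, mulCharComb, sieveExponents]
  refine sum_congr rfl fun e _ ↦ ?_
  have hpow (i : ι) : (χ i ^ e i) x = χ i x ^ e i :=
    (χ i).pow_apply_coe (e i) (Units.mk0 x hx)
  simp only [sieveWeight, mulChar_prod_apply _ _ hx.isUnit, hpow, prod_mul_distrib]

section Finite

variable [Finite F]

lemma zero_mem_sieveExponents : 0 ∈ sieveExponents χ :=
  mem_sieveExponents.mpr fun i ↦ (χ i).orderOf_pos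

lemma sum_norm_sieveWeight :
    ∑ e ∈ sieveExponents χ, ‖sieveWeight χ e‖ = 2 ^ Fintype.card ι * ‖sieveWeight χ 0‖ := by
  classical
  calc ∑ e ∈ sieveExponents χ, ‖sieveWeight χ e‖
    _ = ∏ i, ∑ j ∈ range (orderOf (χ i)), ‖neOneCoeff (orderOf (χ i)) j‖ := by
      rw [prod_univ_sum, sieveExponents]
      exact sum_congr rfl fun e _ ↦ norm_prod _ _
    _ = ∏ i, 2 * ‖neOneCoeff (orderOf (χ i)) 0‖ :=
      prod_congr rfl fun i _ ↦ sum_norm_neOneCoeff (χ i).orderOf_pos.ne'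
    _ = 2 ^ Fintype.card ι * ‖sieveWeight χ 0‖ := by
      simp only [prod_mul_distrib, prod_const, card_univ, sieveWeight, norm_prod, Pi.zero_apply]

lemma apply_ne_one_of_sieveSum_ne_zero {x : F} (hx : sieveSum χ x ≠ 0) (i : ι) : χ i x ≠ 1 := by
  intro h
  have hx₀ : x ≠ 0 := by
    rintro rfl
    exact hx sieveSum_zero
  rw [sieveSum_eq_prod hx₀] at hx
  refine hx (prod_eq_zero (mem_univ i) ?_)
  simpa only [h, one_pow, mul_one] using sum_neOneCoeff (χ i).orderOf_pos.ne'

end Finite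

theorem exists_mulChar_apply_ne_one_and_apply_sub_ne_one [Fintype F]
    (hχ : ∀ i, χ i ≠ 1) (hχ_cop : Pairwise fun i j ↦ (orderOf (χ i)).Coprime (orderOf (χ j)))
    (hψ : ∀ j, ψ j ≠ 1) (hψ_cop : Pairwise fun i j ↦ (orderOf (ψ i)).Coprime (orderOf (ψ j)))
    (hF : 4 < Fintype.card F) (hcard : 4 ^ (Fintype.card ι + Fintype.card κ) ≤ Fintype.card F)
    {a c : F} (ha : a ≠ 0) (hc : c ≠ 0) :
    ∃ x : F, (x ≠ 0 ∧ ∀ i, χ i x ≠ 1) ∧ a - c * x ≠ 0 ∧ ∀ j, ψ j (a - c * x) ≠ 1 := by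
  have hsqrt : (2 : ℝ) ^ Fintype.card ι * 2 ^ Fintype.card κ ≤ √(Fintype.card F) := by
    apply Real.le_sqrt_of_sq_le
    rw [← pow_add, ← pow_mul, mul_comm, pow_mul]
    exact_mod_cast hcard
  have hmass : (∑ e ∈ sieveExponents χ, ‖sieveWeight χ e‖) *
      (∑ e ∈ sieveExponents ψ, ‖sieveWeight ψ e‖) ≤
        √(Fintype.card F) * (‖sieveWeight χ 0‖ * ‖sieveWeight ψ 0‖) := by
    rw [sum_norm_sieveWeight, sum_norm_sieveWeight, mul_mul_mul_comm]
    gcongr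
  have hsum : ∑ x, sieveSum χ x * sieveSum ψ (a - c * x) ≠ 0 :=
    sum_mulCharComb_mul_mulCharComb_sub_ne_zero zero_mem_sieveExponents zero_mem_sieveExponents
      (fun _ ↦ prod_pow_eq_one_iff_of_mem_sieveExponents hχ_cop)
      (fun _ ↦ prod_pow_eq_one_iff_of_mem_sieveExponents hψ_cop)
      (sieveWeight_zero_ne_zero hχ) (sieveWeight_zero_ne_zero hψ) hmass hF ha hc
  obtain ⟨x, -, hx⟩ := exists_ne_zero_of_sum_ne_zero hsum
  have hxχ := left_ne_zero_of_mul hx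
  have hxψ := right_ne_zero_of_mul hx
  exact ⟨x, ⟨fun h ↦ hxχ (h ▸ sieveSum_zero), apply_ne_one_of_sieveSum_ne_zero hxχ⟩,
    fun h ↦ hxψ (h ▸ sieveSum_zero), apply_ne_one_of_sieveSum_ne_zero hxψ⟩

end Sieve

section PrimeFactors

lemma primorial_mul_pow_le_prod_primes {s : Finset ℕ} (hs : ∀ p ∈ s, p.Prime) {n : ℕ}
    (hn : n.primeCounting ≤ #s) :
    primorial n * (n + 1) ^ (#s - n.primeCounting) ≤ ∏ p ∈ s, p := by
  rw [← Nat.primesLE_card_eq_primeCounting] at hn ⊢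
  set A := n.primesLE
  have hlarge : ∀ p ∈ s \ A, n + 1 ≤ p := fun p hp ↦ by
    obtain ⟨hps, hpA⟩ := mem_sdiff.mp hp
    by_contra! hlt
    exact hpA (Nat.mem_primesLE.mpr ⟨Nat.le_of_lt_succ hlt, hs p hps⟩)
  have hsmall : ∀ p ∈ A \ s, p ≤ n + 1 := fun p hp ↦
    Nat.le_succ_of_le (Nat.le_of_mem_primesLE (mem_sdiff.mp hp).1)
  have hcard : #(A \ s) + (#s - #A) = #(s \ A) := by
    have hsA := card_sdiff_add_card_inter s A
    have hAs := card_sdiff_add_card_inter A s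
    rw [inter_comm] at hAs
    omega
  calc primorial n * (n + 1) ^ (#s - #A)
    _ = (∏ p ∈ s ∩ A, p) * (∏ p ∈ A \ s, p) * (n + 1) ^ (#s - #A) := by
      rw [primorial_eq_prod_primesLE, inter_comm, prod_inter_mul_prod_sdiff]
    _ ≤ (∏ p ∈ s ∩ A, p) * (n + 1) ^ #(A \ s) * (n + 1) ^ (#s - #A) := by
      gcongr
      exact prod_le_pow_card _ _ _ hsmall
    _ = (∏ p ∈ s ∩ A, p) * (n + 1) ^ #(s \ A) := by rw [mul_assoc, ← pow_add, hcard]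
    _ ≤ (∏ p ∈ s ∩ A, p) * ∏ p ∈ s \ A, p := by
      gcongr
      exact pow_card_le_prod _ _ _ hlarge
    _ = ∏ p ∈ s, p := prod_inter_mul_prod_sdiff s A _

lemma sixteen_pow_card_le_prod_primes {s : Finset ℕ} (hs : ∀ p ∈ s, p.Prime) (hcard : 16 ≤ #s) :
    16 ^ #s ≤ ∏ p ∈ s, p := by
  have hcount : Nat.primeCounting 53 = 16 := by decide +kernel
  have hprod : 16 ^ 16 ≤ primorial 53 := by decide +kernel
  calc 16 ^ #s = 16 ^ 16 * 16 ^ (#s - 16) := by rw [← pow_add, Nat.add_sub_cancel' hcard]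
    _ ≤ primorial 53 * (53 + 1) ^ (#s - 16) := by gcongr; norm_num
    _ ≤ ∏ p ∈ s, p := by
      simpa only [hcount] using primorial_mul_pow_le_prod_primes hs (hcount.trans_le hcard)

lemma sixteen_pow_card_primeFactors_le {n : ℕ} (hn : 2 ^ 60 ≤ n) :
    16 ^ #n.primeFactors ≤ n := by
  rcases le_or_gt 16 #n.primeFactors with hcard | hcard
  · calc 16 ^ #n.primeFactors ≤ ∏ p ∈ n.primeFactors, p :=
        sixteen_pow_card_le_prod_primes (fun _ ↦ Nat.prime_of_mem_primeFactors) hcard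
      _ ≤ n := Nat.le_of_dvd (by omega) (Nat.prod_primeFactors_dvd n)
  · calc 16 ^ #n.primeFactors ≤ 16 ^ 15 := Nat.pow_le_pow_right (by norm_num) (by omega)
      _ = 2 ^ 60 := by norm_num
      _ ≤ n := hn

end PrimeFactors

theorem memG_of_gt_two_pow_sixty_general {F : Type*} [Field F] [Fintype F]
    (hF : 2 < Fintype.card F)
    (hω : 16 ^ #(Fintype.card F - 1).primeFactors ≤ Fintype.card F) {a c : F} (ha : a ≠ 0)
    (hc : c ≠ 0) :
    ∃ g : F, orderOf g = Fintype.card F - 1 ∧ orderOf (a - c * g) = Fintype.card F - 1 := by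
  set P := (Fintype.card F - 1).primeFactors
  have hP (p : P) : (p : ℕ).Prime := Nat.prime_of_mem_primeFactors p.2
  have hexists (p : P) : ∃ χ : MulChar F ℂ, orderOf χ = p :=
    MulChar.exists_mulChar_orderOf F (Nat.dvd_of_mem_primeFactors p.2)
      (Complex.isPrimitiveRoot_exp p (hP p).ne_zero)
  choose χ hχ using hexists
  have hne (p : P) : χ p ≠ 1 := fun h ↦ (hP p).ne_one (by rw [← hχ p, h, orderOf_one])
  have hcop : Pairwise fun p r : P ↦ (orderOf (χ p)).Coprime (orderOf (χ r)) := fun p r hpr ↦ by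
    simpa only [hχ, Nat.coprime_primes (hP p) (hP r)] using Subtype.coe_ne_coe.mpr hpr
  have hprim {x : F} (hx : x ≠ 0) (h : ∀ p, χ p x ≠ 1) : orderOf x = Fintype.card F - 1 :=
    orderOf_eq_card_sub_one_of_mulChar_ne_one hx fun p hp ↦
      ⟨χ ⟨p, hp⟩, orderOf_dvd_iff_pow_eq_one.mp (hχ _).dvd, h _⟩
  have hPpos : 0 < #P := card_pos.mpr (Nat.nonempty_primeFactors.mpr (by omega))
  have h16 : 16 ^ 1 ≤ Fintype.card F := (Nat.pow_le_pow_right (by norm_num) hPpos).trans hω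
  have h4 : 4 ^ (Fintype.card P + Fintype.card P) ≤ Fintype.card F := by
    rw [Fintype.card_coe, ← two_mul, pow_mul]
    exact hω
  obtain ⟨g, ⟨hg, hgχ⟩, hg', hgχ'⟩ := exists_mulChar_apply_ne_one_and_apply_sub_ne_one
    hne hcop hne hcop (by omega) h4 ha hc
  exact ⟨g, hprim hg hgχ, hprim hg' hgχ'⟩

/-- Every prime power `q > 2^60` lies in `𝒢`. -/
theorem memG_of_gt_two_pow_sixty (q : ℕ) (hq : IsPrimePow q) (h : 2 ^ 60 < q) :
    memG q := by
  have hω : 16 ^ #(q - 1).primeFactors ≤ q :=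
    (sixteen_pow_card_primeFactors_le (Nat.le_sub_one_of_lt h)).trans (Nat.sub_le q 1)
  refine ⟨hq, ?_⟩
  rintro F _ _ rfl a c ha hc
  exact memG_of_gt_two_pow_sixty_general (by omega) hω ha hc
end

section
/- Every prime power q with ω(q−1) = 8 and q > 14647129 lies in G. -/
/-!
Over a field `F` with `q` elements, read an element `α` of the group algebra `ℂ[MulChar F ℂ]` as a
function on `F`. The sum over `x` of `α x * β (a - c * x)` is a combination of Jacobi sums, all of
modulus at most `√q` except the one for the pair of trivial characters. So it is the main term
`α₁ β₁ (q - 2)` up to `(‖α‖₁ ‖β‖₁ - |α₁ β₁|) √q`, where `α₁`, `β₁` are the coefficients at the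
trivial character.

An element of `Fˣ` is a primitive root if and only if it is not a `p`-th power for any prime
`p ∣ q - 1`. Sieving both `x` and `a - c * x` by all these primes at once costs too much, as the
`ℓ¹`-norm doubles with each prime. So only the `m` smallest primes are treated exactly. The loss
from each remaining prime `p` is about `2 / p` of the surviving pairs, which is small enough for a
union bound. The error in imposing one further prime carries no main term, since the element of
the group algebra responsible for it has coefficient `0` at the trivial character. The `i`-th
smallest prime factor of `q - 1` is at least the `i`-th prime, which turns the outcome into a
condition on `ω(q - 1)` and `√q` alone; for `ω(q - 1) = 8` one takes `m = 3`.
-/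

namespace PrimitiveRootPair

open Finset
open scoped MonoidAlgebra

section L1Norm

variable {R G : Type*} [NormedRing R]

/-- The `ℓ¹`-norm of an element of a monoid algebra: the sum of the norms of its coefficients. -/
noncomputable def l1Norm (α : R[G]) : ℝ := α.coeff.sum fun _ z => ‖z‖

lemma l1Norm_eq_sum {α : R[G]} {s : Finset G} (hs : α.coeff.support ⊆ s) :
    l1Norm α = ∑ g ∈ s, ‖α.coeff g‖ :=
  Finsupp.sum_of_support_subset _ hs _ fun _ _ => norm_zero

lemma l1Norm_nonneg (α : R[G]) : 0 ≤ l1Norm α := sum_nonneg fun _ _ => norm_nonneg _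

@[simp]
lemma l1Norm_zero : l1Norm (0 : R[G]) = 0 := by simp [l1Norm]

@[simp]
lemma l1Norm_single (g : G) (z : R) : l1Norm (MonoidAlgebra.single g z) = ‖z‖ := by
  simp [l1Norm]

lemma l1Norm_add_le (α β : R[G]) : l1Norm (α + β) ≤ l1Norm α + l1Norm β := by
  classical
  rw [l1Norm_eq_sum (α := α + β) Finsupp.support_add, l1Norm_eq_sum subset_union_left,
    l1Norm_eq_sum subset_union_right, ← sum_add_distrib]
  exact sum_le_sum fun g _ => norm_add_le _ _

lemma l1Norm_sum_le {ι : Type*} (s : Finset ι) (α : ι → R[G]) :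
    l1Norm (∑ i ∈ s, α i) ≤ ∑ i ∈ s, l1Norm (α i) :=
  le_sum_of_subadditive _ l1Norm_zero.le l1Norm_add_le _ _

lemma l1Norm_smul_le (z : R) (α : R[G]) : l1Norm (z • α) ≤ ‖z‖ * l1Norm α := by
  rw [l1Norm_eq_sum (α := z • α) Finsupp.support_smul, l1Norm, Finsupp.sum, mul_sum]
  exact sum_le_sum fun g _ => norm_mul_le _ _

lemma l1Norm_mul_le [Mul G] (α β : R[G]) : l1Norm (α * β) ≤ l1Norm α * l1Norm β := by
  simp only [l1Norm, Finsupp.sum, sum_mul_sum]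
  rw [MonoidAlgebra.mul_def]
  refine (l1Norm_sum_le _ _).trans (sum_le_sum fun g _ => ?_)
  refine (l1Norm_sum_le _ _).trans (sum_le_sum fun h _ => ?_)
  rw [l1Norm_single]
  exact norm_mul_le _ _

end L1Norm

section CharacterSums

variable {F : Type*} [Field F]

/-- An element `∑ zᵪ χ` of the group algebra of characters, read as the function
`x ↦ ∑ zᵪ χ x` on the field. It is not unital: the trivial character vanishes at `0`. -/
noncomputable def toFun : ℂ[MulChar F ℂ] →ₙₐ[ℂ] (F → ℂ) :=
  MonoidAlgebra.liftMagma ℂ ⟨fun χ => χ, MulChar.coeToFun_mul⟩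

lemma toFun_apply (α : ℂ[MulChar F ℂ]) (x : F) :
    toFun α x = α.coeff.sum fun χ z => z * χ x := by
  simp [toFun, Finsupp.sum, Finset.sum_apply]

lemma toFun_single (χ : MulChar F ℂ) (z : ℂ) (x : F) :
    toFun (MonoidAlgebra.single χ z) x = z * χ x := by
  simp [toFun_apply]

lemma toFun_apply_zero (α : ℂ[MulChar F ℂ]) : toFun α 0 = 0 := by
  rw [toFun_apply]
  exact sum_eq_zero fun χ _ => mul_eq_zero_of_right _ χ.map_zero

lemma norm_mulChar_le_one [Finite F] (χ : MulChar F ℂ) (x : F) : ‖χ x‖ ≤ 1 := by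
  rcases eq_or_ne x 0 with rfl | hx
  · rw [χ.map_zero, norm_zero]
    exact zero_le_one
  · have hfin : IsOfFinOrder (Units.mk0 x hx) := isOfFinOrder_of_finite _
    have hfin' : IsOfFinOrder (χ x) :=
      χ.toMonoidHom.isOfFinOrder ((Units.coeHom F).isOfFinOrder hfin)
    exact hfin'.norm_eq_one.le

variable [Fintype F]

lemma norm_jacobiSum_eq_sqrt_card {χ ψ : MulChar F ℂ} (hχ : χ ≠ 1) (hψ : ψ ≠ 1)
    (hχψ : χ * ψ ≠ 1) : ‖jacobiSum χ ψ‖ = √(Fintype.card F) := by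
  have hchar : ringChar ℂ ≠ ringChar F := by
    rw [ringChar.eq_zero]
    exact (CharP.ringChar_ne_zero_of_finite F).symm
  have hconj : jacobiSum χ⁻¹ ψ⁻¹ = starRingEnd ℂ (jacobiSum χ ψ) := by
    rw [← MulChar.star_eq_inv, ← MulChar.star_eq_inv]
    exact jacobiSum_ringHomComp χ ψ _
  have hmul := jacobiSum_mul_jacobiSum_inv hchar hχ hψ hχψ
  rw [hconj, Complex.mul_conj, Complex.normSq_eq_norm_sq] at hmul
  rw [← Real.sqrt_sq (norm_nonneg (jacobiSum χ ψ))]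
  congr 1
  exact_mod_cast hmul

lemma norm_jacobiSum_le_sqrt_card {χ ψ : MulChar F ℂ} (h : ¬(χ = 1 ∧ ψ = 1)) :
    ‖jacobiSum χ ψ‖ ≤ √(Fintype.card F) := by
  have hone : 1 ≤ √(Fintype.card F : ℝ) :=
    Real.one_le_sqrt.2 (Nat.one_le_cast.2 Fintype.card_pos)
  rcases eq_or_ne χ 1 with rfl | hχ
  · simpa [jacobiSum_one_nontrivial fun hψ => h ⟨rfl, hψ⟩] using hone
  rcases eq_or_ne ψ 1 with rfl | hψ
  · simpa [jacobiSum_comm χ, jacobiSum_one_nontrivial hχ] using hone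
  by_cases hχψ : χ * ψ = 1
  · rw [eq_inv_of_mul_eq_one_right hχψ, jacobiSum_nontrivial_inv hχ, norm_neg]
    exact (norm_mulChar_le_one χ _).trans hone
  · exact (norm_jacobiSum_eq_sqrt_card hχ hψ hχψ).le

lemma sum_mulChar_mul_affine (χ ψ : MulChar F ℂ) {a c : F} (ha : a ≠ 0) (hc : c ≠ 0) :
    ∑ x, χ x * ψ (a - c * x) = χ (a / c) * ψ a * jacobiSum χ ψ := by
  rw [jacobiSum, mul_sum, ← Equiv.sum_comp (Equiv.mulLeft₀ (a / c) (div_ne_zero ha hc))]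
  refine sum_congr rfl fun x _ => ?_
  have hx : a - c * (a / c * x) = a * (1 - x) := by field_simp
  rw [Equiv.mulLeft₀_apply, hx, map_mul, map_mul]
  ring

lemma norm_sum_mulChar_mul_affine_le {χ ψ : MulChar F ℂ} (h : ¬(χ = 1 ∧ ψ = 1)) {a c : F}
    (ha : a ≠ 0) (hc : c ≠ 0) : ‖∑ x, χ x * ψ (a - c * x)‖ ≤ √(Fintype.card F) := by
  rw [sum_mulChar_mul_affine χ ψ ha hc, norm_mul, norm_mul]
  have hle := mul_le_one₀ (norm_mulChar_le_one χ (a / c)) (norm_nonneg _) (norm_mulChar_le_one ψ a)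
  exact (mul_le_of_le_one_left (norm_nonneg _) hle).trans (norm_jacobiSum_le_sqrt_card h)

lemma sum_one_mul_one_affine {a c : F} (ha : a ≠ 0) (hc : c ≠ 0) :
    ∑ x, (1 : MulChar F ℂ) x * (1 : MulChar F ℂ) (a - c * x) = Fintype.card F - 2 := by
  simp [sum_mulChar_mul_affine 1 1 ha hc, jacobiSum_one_one,
    MulChar.one_apply (div_ne_zero ha hc).isUnit, MulChar.one_apply ha.isUnit]

lemma sum_toFun_mul_affine (α β : ℂ[MulChar F ℂ]) (a c : F) {s t : Finset (MulChar F ℂ)}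
    (hs : α.coeff.support ⊆ s) (ht : β.coeff.support ⊆ t) :
    ∑ x, toFun α x * toFun β (a - c * x) =
      ∑ p ∈ s ×ˢ t, α.coeff p.1 * β.coeff p.2 * ∑ x, p.1 x * p.2 (a - c * x) := by
  have hα (x : F) : toFun α x = ∑ χ ∈ s, α.coeff χ * χ x :=
    (toFun_apply α x).trans (Finsupp.sum_of_support_subset _ hs _ fun _ _ => zero_mul _)
  have hβ (x : F) : toFun β x = ∑ ψ ∈ t, β.coeff ψ * ψ x :=
    (toFun_apply β x).trans (Finsupp.sum_of_support_subset _ ht _ fun _ _ => zero_mul _)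
  simp_rw [hα, hβ, sum_mul_sum, ← sum_product' s t, mul_sum]
  rw [sum_comm]
  exact sum_congr rfl fun p _ => sum_congr rfl fun x _ => by ring

/-- Only the pair of trivial characters contributes to the main term; every other pair contributes
a Jacobi sum, up to a factor of modulus one. -/
lemma norm_sum_toFun_mul_affine_sub_le (α β : ℂ[MulChar F ℂ]) {a c : F} (ha : a ≠ 0)
    (hc : c ≠ 0) :
    ‖∑ x, toFun α x * toFun β (a - c * x) - α.coeff 1 * β.coeff 1 * (Fintype.card F - 2)‖ ≤
      (l1Norm α * l1Norm β - ‖α.coeff 1‖ * ‖β.coeff 1‖) * √(Fintype.card F) := by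
  classical
  set s := insert 1 α.coeff.support
  set t := insert 1 β.coeff.support
  have hs : α.coeff.support ⊆ s := subset_insert _ _
  have ht : β.coeff.support ⊆ t := subset_insert _ _
  have hone : (1, 1) ∈ s ×ˢ t := mk_mem_product (mem_insert_self _ _) (mem_insert_self _ _)
  calc _ = ‖∑ p ∈ (s ×ˢ t).erase (1, 1),
        α.coeff p.1 * β.coeff p.2 * ∑ x, p.1 x * p.2 (a - c * x)‖ := by
        rw [sum_toFun_mul_affine α β a c hs ht, sum_erase_eq_sub hone,
          sum_one_mul_one_affine ha hc]
    _ ≤ ∑ p ∈ (s ×ˢ t).erase (1, 1), ‖α.coeff p.1‖ * ‖β.coeff p.2‖ * √(Fintype.card F) := by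
        refine norm_sum_le_of_le _ fun p hp => ?_
        rw [norm_mul, norm_mul]
        gcongr
        refine norm_sum_mulChar_mul_affine_le (fun h => ?_) ha hc
        exact ne_of_mem_erase hp (Prod.ext h.1 h.2)
    _ = _ := by
        rw [← sum_mul, sum_erase_eq_sub hone, l1Norm_eq_sum hs, l1Norm_eq_sum ht, sum_mul_sum,
          sum_product]

end CharacterSums

section SieveElement

variable {G ι : Type*} [CommGroup G]

/-- One minus the average of the powers of `g`. Since a sum over the roots of unity vanishes, a
homomorphism `φ : G → ℂ` sends it to `0` if `φ g = 1` and to `1` otherwise. -/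
noncomputable def sieveFactor (g : G) : ℂ[G] :=
  1 - (orderOf g : ℂ)⁻¹ • ∑ k ∈ range (orderOf g), MonoidAlgebra.single (g ^ k) 1

/-- The product of the sieving elements of the `X i`, `i ∈ P`. -/
noncomputable def sieve (X : ι → G) (P : Finset ι) : ℂ[G] := ∏ i ∈ P, sieveFactor (X i)

/-- The expected proportion `∏ (1 - 1 / nᵢ)` of elements surviving `sieve X P`, where `nᵢ` is the
order of `X i`. -/
noncomputable def density (X : ι → G) (P : Finset ι) : ℝ := ∏ i ∈ P, (1 - (orderOf (X i) : ℝ)⁻¹)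

lemma one_sub_inv_orderOf_nonneg (g : G) : 0 ≤ 1 - (orderOf g : ℝ)⁻¹ :=
  sub_nonneg.2 (Nat.cast_inv_le_one _)

lemma density_nonneg (X : ι → G) (P : Finset ι) : 0 ≤ density X P :=
  prod_nonneg fun i _ => one_sub_inv_orderOf_nonneg (X i)

lemma norm_one_sub_inv_orderOf (g : G) :
    ‖1 - (orderOf g : ℂ)⁻¹‖ = 1 - (orderOf g : ℝ)⁻¹ := by
  rw [← Complex.norm_of_nonneg (one_sub_inv_orderOf_nonneg g)]
  push_cast
  rfl

lemma orderOf_dvd_of_mem_support_sieveFactor {g h : G}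
    (hh : h ∈ (sieveFactor g).coeff.support) : orderOf h ∣ orderOf g := by
  by_contra hdvd
  have hne (k : ℕ) : g ^ k ≠ h := by
    rintro rfl
    exact hdvd (orderOf_pow_dvd k)
  have hone : 1 ≠ h := pow_zero g ▸ hne 0
  refine Finsupp.mem_support_iff.1 hh ?_
  simp [sieveFactor, MonoidAlgebra.one_def, MonoidAlgebra.coeff_sum, hone, hne]

lemma coprime_orderOf_of_mem_support_sieve {X : ι → G} {P : Finset ι} {n : ℕ}
    (hn : ∀ i ∈ P, (orderOf (X i)).Coprime n) {g : G} (hg : g ∈ (sieve X P).coeff.support) :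
    (orderOf g).Coprime n := by
  classical
  induction P using Finset.induction_on generalizing g with
  | empty =>
    rw [sieve, prod_empty, MonoidAlgebra.support_coeff_one, Finset.mem_one] at hg
    rw [hg, orderOf_one]
    exact n.coprime_one_left
  | insert i P hi ih =>
    rw [sieve, prod_insert hi] at hg
    obtain ⟨a, ha, b, hb, rfl⟩ := mem_mul.1 (MonoidAlgebra.support_coeff_mul_subset _ _ hg)
    rw [forall_mem_insert] at hn
    have hab : (orderOf a * orderOf b).Coprime n :=
      (hn.1.coprime_dvd_left (orderOf_dvd_of_mem_support_sieveFactor ha)).mul_left (ih hn.2 hb)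
    exact hab.coprime_dvd_left (Commute.all a b).orderOf_mul_dvd_mul_orderOf

variable [Finite G]

lemma density_pos {X : ι → G} {P : Finset ι} (hX : ∀ i ∈ P, X i ≠ 1) : 0 < density X P := by
  refine prod_pos fun i hi => sub_pos.2 (inv_lt_one_of_one_lt₀ ?_)
  have hne : orderOf (X i) ≠ 1 := orderOf_eq_one_iff.not.2 (hX i hi)
  have hpos : 0 < orderOf (X i) := orderOf_pos _
  exact_mod_cast (by omega : 1 < orderOf (X i))

lemma sieveFactor_eq (g : G) :
    sieveFactor g = (1 - (orderOf g : ℂ)⁻¹) • (1 : ℂ[G])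
      - (orderOf g : ℂ)⁻¹ • ∑ k ∈ Ico 1 (orderOf g), MonoidAlgebra.single (g ^ k) 1 := by
  rw [sieveFactor, range_eq_Ico, sum_eq_sum_Ico_succ_bot (orderOf_pos g), pow_zero,
    ← MonoidAlgebra.one_def, smul_add, sub_smul, one_smul, sub_sub]

lemma coeff_one_sieveFactor (g : G) : (sieveFactor g).coeff 1 = 1 - (orderOf g : ℂ)⁻¹ := by
  have hzero : (∑ k ∈ Ico 1 (orderOf g), MonoidAlgebra.single (g ^ k) (1 : ℂ)).coeff 1 = 0 := by
    rw [MonoidAlgebra.coeff_sum, Finsupp.finsetSum_apply]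
    refine sum_eq_zero fun k hk => ?_
    obtain ⟨hk0, hk1⟩ := mem_Ico.1 hk
    exact Finsupp.single_eq_of_ne' (pow_ne_one_of_lt_orderOf (Nat.one_le_iff_ne_zero.1 hk0) hk1)
  rw [sieveFactor_eq, MonoidAlgebra.coeff_sub, MonoidAlgebra.coeff_smul, MonoidAlgebra.coeff_smul,
    Finsupp.sub_apply, Finsupp.smul_apply, Finsupp.smul_apply, hzero]
  simp [MonoidAlgebra.one_def]

lemma l1Norm_sieveFactor_sub_le (g : G) :
    l1Norm (sieveFactor g - (1 - (orderOf g : ℂ)⁻¹) • (1 : ℂ[G])) ≤ 1 - (orderOf g : ℝ)⁻¹ := by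
  have hpos : (0 : ℝ) < orderOf g := Nat.cast_pos.2 (orderOf_pos g)
  have hsum : l1Norm (∑ k ∈ Ico 1 (orderOf g), MonoidAlgebra.single (g ^ k) (1 : ℂ))
      ≤ (orderOf g : ℝ) - 1 := by
    refine (l1Norm_sum_le _ _).trans_eq ?_
    simp [Nat.cast_sub (orderOf_pos g)]
  calc _ = l1Norm (-(orderOf g : ℂ)⁻¹ •
        ∑ k ∈ Ico 1 (orderOf g), MonoidAlgebra.single (g ^ k) (1 : ℂ)) := by
        rw [sieveFactor_eq, sub_sub_cancel_left, neg_smul]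
    _ ≤ (orderOf g : ℝ)⁻¹ * (orderOf g - 1) := by
        refine (l1Norm_smul_le _ _).trans ?_
        rw [norm_neg, norm_inv, Complex.norm_natCast]
        gcongr
    _ = 1 - (orderOf g : ℝ)⁻¹ := by field_simp

lemma l1Norm_sieveFactor_le (g : G) : l1Norm (sieveFactor g) ≤ 2 * (1 - (orderOf g : ℝ)⁻¹) := by
  have hone : l1Norm ((1 - (orderOf g : ℂ)⁻¹) • (1 : ℂ[G])) ≤ 1 - (orderOf g : ℝ)⁻¹ := by
    simpa [MonoidAlgebra.one_def, norm_one_sub_inv_orderOf] using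
      l1Norm_smul_le (1 - (orderOf g : ℂ)⁻¹) (1 : ℂ[G])
  have hadd := l1Norm_add_le (sieveFactor g - (1 - (orderOf g : ℂ)⁻¹) • (1 : ℂ[G]))
    ((1 - (orderOf g : ℂ)⁻¹) • (1 : ℂ[G]))
  rw [sub_add_cancel] at hadd
  linarith [l1Norm_sieveFactor_sub_le g]

lemma l1Norm_sieve_le (X : ι → G) (P : Finset ι) :
    l1Norm (sieve X P) ≤ 2 ^ #P * density X P := by
  classical
  induction P using Finset.induction_on with
  | empty => simp [sieve, density, MonoidAlgebra.one_def]
  | insert i P hi ih =>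
    calc l1Norm (sieve X (insert i P)) ≤ l1Norm (sieveFactor (X i)) * l1Norm (sieve X P) := by
          rw [sieve, prod_insert hi]
          exact l1Norm_mul_le _ _
      _ ≤ (2 * (1 - (orderOf (X i) : ℝ)⁻¹)) * (2 ^ #P * density X P) :=
          mul_le_mul (l1Norm_sieveFactor_le _) ih (l1Norm_nonneg _)
            (mul_nonneg zero_le_two (one_sub_inv_orderOf_nonneg _))
      _ = 2 ^ #(insert i P) * density X (insert i P) := by
          rw [card_insert_of_notMem hi, density, density, prod_insert hi, pow_succ]
          ring

lemma coeff_one_sieveFactor_mul_sieve {X : ι → G} {i : ι} {P : Finset ι}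
    (hi : ∀ j ∈ P, (orderOf (X i)).Coprime (orderOf (X j))) :
    (sieveFactor (X i) * sieve X P).coeff 1 =
      (1 - (orderOf (X i) : ℂ)⁻¹) * (sieve X P).coeff 1 := by
  have huniq : UniqueMul (sieveFactor (X i)).coeff.support (sieve X P).coeff.support 1 1 := by
    intro g h hg hh hgh
    have hdvd : orderOf g ∣ orderOf (X i) := orderOf_dvd_of_mem_support_sieveFactor hg
    have hcop : (orderOf h).Coprime (orderOf (X i)) :=
      coprime_orderOf_of_mem_support_sieve (fun j hj => (hi j hj).symm) hh
    rw [mul_one] at hgh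
    rw [eq_inv_of_mul_eq_one_right hgh, orderOf_inv] at hcop
    have hg1 : g = 1 := orderOf_eq_one_iff.1 (hcop.eq_one_of_dvd hdvd)
    exact ⟨hg1, by rwa [hg1, one_mul] at hgh⟩
  rw [← coeff_one_sieveFactor, ← MonoidAlgebra.coeff_mul_mul_of_uniqueMul huniq, one_mul]

lemma coeff_one_sieve {X : ι → G} {P : Finset ι}
    (hP : (P : Set ι).Pairwise fun i j => (orderOf (X i)).Coprime (orderOf (X j))) :
    (sieve X P).coeff 1 = density X P := by
  classical
  induction P using Finset.induction_on with
  | empty => simp [sieve, density, MonoidAlgebra.one_def]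
  | insert i P hi ih =>
    have hPi : ∀ j ∈ P, (orderOf (X i)).Coprime (orderOf (X j)) := fun j hj =>
      hP (mem_insert_self i P) (mem_insert_of_mem hj) (ne_of_mem_of_not_mem hj hi).symm
    rw [sieve, prod_insert hi, ← sieve, coeff_one_sieveFactor_mul_sieve hPi,
      ih (hP.mono (coe_subset.2 (subset_insert i P))), density,
      density, prod_insert hi]
    push_cast
    rfl

lemma coeff_one_sieve_insert_sub {X : ι → G} {i : ι} {P : Finset ι} [DecidableEq ι] (hi : i ∉ P)
    (hcop : ∀ j ∈ P, (orderOf (X i)).Coprime (orderOf (X j))) :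
    (sieve X (insert i P) - (1 - (orderOf (X i) : ℂ)⁻¹) • sieve X P).coeff 1 = 0 := by
  rw [MonoidAlgebra.coeff_sub, MonoidAlgebra.coeff_smul, Finsupp.sub_apply, Finsupp.smul_apply,
    sieve, prod_insert hi, ← sieve, coeff_one_sieveFactor_mul_sieve hcop, smul_eq_mul, sub_self]

lemma l1Norm_sieve_insert_sub_le (X : ι → G) {i : ι} {P : Finset ι} [DecidableEq ι] (hi : i ∉ P) :
    l1Norm (sieve X (insert i P) - (1 - (orderOf (X i) : ℂ)⁻¹) • sieve X P) ≤
      (1 - (orderOf (X i) : ℝ)⁻¹) * (2 ^ #P * density X P) := by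
  have hfactor : sieve X (insert i P) - (1 - (orderOf (X i) : ℂ)⁻¹) • sieve X P =
      (sieveFactor (X i) - (1 - (orderOf (X i) : ℂ)⁻¹) • (1 : ℂ[G])) * sieve X P := by
    rw [sieve, prod_insert hi, ← sieve, sub_mul, smul_one_mul]
  rw [hfactor]
  exact (l1Norm_mul_le _ _).trans <| mul_le_mul (l1Norm_sieveFactor_sub_le _)
    (l1Norm_sieve_le X P) (l1Norm_nonneg _) (one_sub_inv_orderOf_nonneg _)

end SieveElement

section FreeElements

variable {F ι : Type*} [Field F]

/-- `x` is free with respect to the characters `X i`, `i ∈ P`, if it is nonzero and none of them is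
trivial on it. For `X p` of order `p` this is the classical notion of not being a `p`-th power. -/
def IsFree (X : ι → MulChar F ℂ) (P : Finset ι) (x : F) : Prop :=
  x ≠ 0 ∧ ∀ i ∈ P, X i x ≠ 1

lemma isFree_insert [DecidableEq ι] {X : ι → MulChar F ℂ} {i : ι} {P : Finset ι} {x : F} :
    IsFree X (insert i P) x ↔ X i x ≠ 1 ∧ IsFree X P x := by
  simp only [IsFree, forall_mem_insert]
  tauto

lemma isFree_union [DecidableEq ι] {X : ι → MulChar F ℂ} {P T : Finset ι} {x : F} :
    IsFree X (P ∪ T) x ↔ IsFree X P x ∧ ∀ i ∈ T, X i x ≠ 1 := by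
  simp only [IsFree, forall_mem_union, and_assoc]

variable [Finite F]

lemma toFun_sieveFactor [DecidableEq ℂ] (χ : MulChar F ℂ) {x : F} (hx : x ≠ 0) :
    toFun (sieveFactor χ) x = if χ x = 1 then 0 else 1 := by
  have hpow (k : ℕ) : (χ ^ k) x = χ x ^ k := χ.pow_apply_coe k (Units.mk0 x hx)
  have heval : toFun (sieveFactor χ) x =
      1 - (orderOf χ : ℂ)⁻¹ * ∑ k ∈ range (orderOf χ), χ x ^ k := by
    simp [sieveFactor, MonoidAlgebra.one_def, toFun_single, MulChar.one_apply hx.isUnit, hpow]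
  rw [heval]
  split_ifs with h
  · simp [h, χ.orderOf_pos.ne']
  · rw [geom_sum_eq h, ← hpow, pow_orderOf_eq_one, MulChar.one_apply hx.isUnit, sub_self,
      zero_div, mul_zero, sub_zero]

open Classical in
lemma toFun_sieve (X : ι → MulChar F ℂ) (P : Finset ι) (x : F) :
    toFun (sieve X P) x = if IsFree X P x then 1 else 0 := by
  rcases eq_or_ne x 0 with rfl | hx
  · simp [toFun_apply_zero, IsFree]
  induction P using Finset.induction_on with
  | empty => simp [sieve, IsFree, hx, MonoidAlgebra.one_def, toFun_single,
      MulChar.one_apply hx.isUnit]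
  | insert i P hi ih =>
    rw [sieve, prod_insert hi, ← sieve, map_mul, Pi.mul_apply, ih, toFun_sieveFactor _ hx]
    by_cases h : X i x = 1 <;> simp [isFree_insert, h]

end FreeElements

section FreePairs

variable {F ι : Type*} [Field F] [Fintype F]

open Classical in
/-- The `x ∈ F` such that `x` is free for the characters in `P` and `a - c * x` for those in `Q`. -/
noncomputable def freePairs (X : ι → MulChar F ℂ) (a c : F) (P Q : Finset ι) : Finset F :=
  {x | IsFree X P x ∧ IsFree X Q (a - c * x)}

lemma mem_freePairs {X : ι → MulChar F ℂ} {a c : F} {P Q : Finset ι} {x : F} :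
    x ∈ freePairs X a c P Q ↔ IsFree X P x ∧ IsFree X Q (a - c * x) := by
  simp [freePairs]

lemma card_freePairs (X : ι → MulChar F ℂ) (a c : F) (P Q : Finset ι) :
    (#(freePairs X a c P Q) : ℂ) =
      ∑ x, toFun (sieve X P) x * toFun (sieve X Q) (a - c * x) := by
  classical
  rw [freePairs, natCast_card_filter]
  refine sum_congr rfl fun x _ => ?_
  rw [toFun_sieve, toFun_sieve, ite_and, ite_mul, one_mul, zero_mul]

lemma card_freePairs_swap (X : ι → MulChar F ℂ) (a : F) {c : F} (hc : c ≠ 0) (P Q : Finset ι) :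
    #(freePairs X a c P Q) = #(freePairs X (a / c) c⁻¹ Q P) := by
  have hinv (x : F) : a / c - c⁻¹ * (a - c * x) = x := by field_simp; ring
  have hinv' (y : F) : a - c * (a / c - c⁻¹ * y) = y := by field_simp; ring
  refine card_nbij' (fun x => a - c * x) (fun y => a / c - c⁻¹ * y) ?_ ?_
    (fun x _ => hinv x) (fun y _ => hinv' y)
  · intro x hx
    rw [mem_coe, mem_freePairs] at hx ⊢
    rwa [hinv, and_comm]
  · intro y hy
    rw [mem_coe, mem_freePairs] at hy ⊢
    rwa [hinv', and_comm]

variable {X : ι → MulChar F ℂ} {a c : F} {P Q : Finset ι}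

lemma abs_card_freePairs_sub_le (ha : a ≠ 0) (hc : c ≠ 0)
    (hP : (P : Set ι).Pairwise fun i j => (orderOf (X i)).Coprime (orderOf (X j)))
    (hQ : (Q : Set ι).Pairwise fun i j => (orderOf (X i)).Coprime (orderOf (X j))) :
    |#(freePairs X a c P Q) - density X P * density X Q * (Fintype.card F - 2)| ≤
      (2 ^ #P * 2 ^ #Q - 1) * (density X P * density X Q) * √(Fintype.card F) := by
  have h := norm_sum_toFun_mul_affine_sub_le (sieve X P) (sieve X Q) ha hc
  rw [← card_freePairs, coeff_one_sieve hP, coeff_one_sieve hQ,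
    Complex.norm_of_nonneg (density_nonneg X P), Complex.norm_of_nonneg (density_nonneg X Q)] at h
  rw [← Real.norm_eq_abs, ← Complex.norm_real]
  push_cast
  refine h.trans ?_
  have hmul := mul_le_mul (l1Norm_sieve_le X P) (l1Norm_sieve_le X Q) (l1Norm_nonneg _)
    (by positivity [density_nonneg X P])
  gcongr
  linarith

lemma abs_card_freePairs_insert_left_sub_le [DecidableEq ι] (ha : a ≠ 0) (hc : c ≠ 0) {i : ι}
    (hi : i ∉ P) (hcop : ∀ j ∈ P, (orderOf (X i)).Coprime (orderOf (X j))) (Q : Finset ι) :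
    |#(freePairs X a c (insert i P) Q) - (1 - (orderOf (X i) : ℝ)⁻¹) * #(freePairs X a c P Q)| ≤
      (1 - (orderOf (X i) : ℝ)⁻¹) * (2 ^ #P * 2 ^ #Q * (density X P * density X Q)) *
        √(Fintype.card F) := by
  have hsum : ∑ x, toFun (sieve X (insert i P) - (1 - (orderOf (X i) : ℂ)⁻¹) • sieve X P) x *
      toFun (sieve X Q) (a - c * x) =
      #(freePairs X a c (insert i P) Q) -
        (1 - (orderOf (X i) : ℂ)⁻¹) * #(freePairs X a c P Q) := by
    simp_rw [card_freePairs, map_sub, map_smul, Pi.sub_apply, Pi.smul_apply, smul_eq_mul, sub_mul,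
      sum_sub_distrib, mul_sum, mul_assoc]
  have h := norm_sum_toFun_mul_affine_sub_le
    (sieve X (insert i P) - (1 - (orderOf (X i) : ℂ)⁻¹) • sieve X P) (sieve X Q) ha hc
  rw [hsum, coeff_one_sieve_insert_sub hi hcop, norm_zero, zero_mul, zero_mul, zero_mul,
    sub_zero, sub_zero] at h
  rw [← Real.norm_eq_abs, ← Complex.norm_real]
  push_cast
  have hmul := mul_le_mul (l1Norm_sieve_insert_sub_le X hi) (l1Norm_sieve_le X Q) (l1Norm_nonneg _)
    (mul_nonneg (one_sub_inv_orderOf_nonneg _) (by positivity [density_nonneg X P]))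
  refine h.trans (mul_le_mul_of_nonneg_right (hmul.trans_eq ?_) (Real.sqrt_nonneg _))
  ring

lemma abs_card_freePairs_insert_right_sub_le [DecidableEq ι] (ha : a ≠ 0) (hc : c ≠ 0) {i : ι}
    (hi : i ∉ Q) (hcop : ∀ j ∈ Q, (orderOf (X i)).Coprime (orderOf (X j))) (P : Finset ι) :
    |#(freePairs X a c P (insert i Q)) - (1 - (orderOf (X i) : ℝ)⁻¹) * #(freePairs X a c P Q)| ≤
      (1 - (orderOf (X i) : ℝ)⁻¹) * (2 ^ #P * 2 ^ #Q * (density X P * density X Q)) *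
        √(Fintype.card F) := by
  rw [card_freePairs_swap X a hc, card_freePairs_swap X a hc, mul_comm (2 ^ #P),
    mul_comm (density X P)]
  exact abs_card_freePairs_insert_left_sub_le (div_ne_zero ha hc) (inv_ne_zero hc) hi hcop P

end FreePairs

section UnionBound

lemma sum_card_filter_add_card_le {α κ : Type*} (A : Finset α) (s : Finset κ) (p : κ → α → Prop)
    [∀ i, DecidablePred (p i)] :
    ∑ i ∈ s, #{x ∈ A | p i x} + #A ≤ #{x ∈ A | ∀ i ∈ s, p i x} + #s * #A := by
  classical
  have hbad : #{x ∈ A | ¬∀ i ∈ s, p i x} ≤ ∑ i ∈ s, #{x ∈ A | ¬p i x} := by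
    refine (card_le_card fun x hx => ?_).trans card_biUnion_le
    simpa [and_left_comm] using hx
  have hall := card_filter_add_card_filter_not (s := A) fun x => ∀ i ∈ s, p i x
  have hsum : ∑ i ∈ s, #{x ∈ A | p i x} + ∑ i ∈ s, #{x ∈ A | ¬p i x} = #s * #A := by
    rw [← sum_add_distrib]
    exact sum_const_nat fun i _ => card_filter_add_card_filter_not _
  omega

variable {F ι : Type*} [Field F] [Fintype F]

lemma density_sq_mul_sub_le_card_freePairs {X : ι → MulChar F ℂ} {a c : F} {P : Finset ι}
    (ha : a ≠ 0) (hc : c ≠ 0)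
    (hP : (P : Set ι).Pairwise fun i j => (orderOf (X i)).Coprime (orderOf (X j)))
    (hF : 2 ≤ √(Fintype.card F)) :
    density X P ^ 2 * (√(Fintype.card F) ^ 2 - 4 ^ #P * √(Fintype.card F)) ≤
      #(freePairs X a c P P) := by
  have h := neg_le_of_abs_le (abs_card_freePairs_sub_le ha hc hP hP)
  have hsq : √(Fintype.card F : ℝ) ^ 2 = Fintype.card F := Real.sq_sqrt (Nat.cast_nonneg _)
  have hpow : (4 : ℝ) ^ #P = 2 ^ #P * 2 ^ #P := by rw [← mul_pow]; norm_num
  have hgain := mul_nonneg (sq_nonneg (density X P)) (sub_nonneg.2 hF)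
  rw [hsq, hpow]
  linarith

variable [DecidableEq ι]

lemma sum_card_freePairs_insert_add_le (X : ι → MulChar F ℂ) (a c : F) (P T : Finset ι) :
    ∑ i ∈ T, (#(freePairs X a c (insert i P) P) + #(freePairs X a c P (insert i P))) +
        #(freePairs X a c P P) ≤
      #(freePairs X a c (P ∪ T) (P ∪ T)) + 2 * #T * #(freePairs X a c P P) := by
  classical
  have hleft (i : ι) :
      freePairs X a c (insert i P) P = {x ∈ freePairs X a c P P | X i x ≠ 1} := by
    ext x
    simp only [mem_freePairs, isFree_insert, mem_filter]
    tauto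
  have hright (i : ι) :
      freePairs X a c P (insert i P) = {x ∈ freePairs X a c P P | X i (a - c * x) ≠ 1} := by
    ext x
    simp only [mem_freePairs, isFree_insert, mem_filter]
    tauto
  let p : ι ⊕ ι → F → Prop := Sum.elim (fun i x => X i x ≠ 1) fun i x => X i (a - c * x) ≠ 1
  have hunion : freePairs X a c (P ∪ T) (P ∪ T) =
      {x ∈ freePairs X a c P P | ∀ i ∈ T.disjSum T, p i x} := by
    ext x
    simp only [mem_freePairs, isFree_union, mem_filter, Sum.forall, inl_mem_disjSum,
      inr_mem_disjSum, p, Sum.elim_inl, Sum.elim_inr]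
    tauto
  have h := sum_card_filter_add_card_le (freePairs X a c P P) (T.disjSum T) p
  rw [sum_disjSum, ← sum_add_distrib, card_disjSum, ← two_mul, ← hunion] at h
  simp_rw [hleft, hright]
  convert h

lemma le_card_freePairs_union {X : ι → MulChar F ℂ} {a c : F} {P T : Finset ι} (ha : a ≠ 0)
    (hc : c ≠ 0) (hPT : Disjoint P T)
    (hX : ((P ∪ T : Finset ι) : Set ι).Pairwise
      fun i j => (orderOf (X i)).Coprime (orderOf (X j)))
    {δ : ℝ} (hδ : δ = 1 - 2 * ∑ i ∈ T, (orderOf (X i) : ℝ)⁻¹) (hδ0 : 0 ≤ δ)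
    (hF : 2 ≤ √(Fintype.card F)) :
    density X P ^ 2 * √(Fintype.card F) *
        (δ * √(Fintype.card F) - 4 ^ #P * (2 * #T - 1 + 2 * δ)) ≤
      #(freePairs X a c (P ∪ T) (P ∪ T)) := by
  have hunion := (Nat.cast_le (α := ℝ)).2 (sum_card_freePairs_insert_add_le X a c P T)
  push_cast at hunion
  set s := √(Fintype.card F : ℝ)
  set N : ℝ := ((#(freePairs X a c P P) : ℕ) : ℝ)
  set E : ℝ := 4 ^ #P * density X P ^ 2 * s with hE
  have hpow : (4 : ℝ) ^ #P = 2 ^ #P * 2 ^ #P := by rw [← mul_pow]; norm_num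
  have hmain : density X P ^ 2 * (s ^ 2 - 4 ^ #P * s) ≤ N :=
    density_sq_mul_sub_le_card_freePairs ha hc (hX.mono (coe_subset.2 subset_union_left)) hF
  have hinsert (i) (hi : i ∈ T) : 2 * (1 - (orderOf (X i) : ℝ)⁻¹) * (N - E) ≤
      #(freePairs X a c (insert i P) P) + #(freePairs X a c P (insert i P)) := by
    have hiP : i ∉ P := disjoint_right.1 hPT hi
    have hcop : ∀ j ∈ P, (orderOf (X i)).Coprime (orderOf (X j)) := fun j hj =>
      hX (mem_union_right P hi) (mem_union_left T hj) (ne_of_mem_of_not_mem hj hiP).symm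
    have hl := neg_le_of_abs_le (abs_card_freePairs_insert_left_sub_le ha hc hiP hcop P)
    have hr := neg_le_of_abs_le (abs_card_freePairs_insert_right_sub_le ha hc hiP hcop P)
    rw [hE, hpow]
    linarith
  have hsum : (2 * #T - 1 + δ) * (N - E) ≤
      ∑ i ∈ T, ((#(freePairs X a c (insert i P) P) : ℝ) + #(freePairs X a c P (insert i P))) := by
    refine (sum_le_sum hinsert).trans_eq' ?_
    rw [← sum_mul, ← mul_sum, sum_sub_distrib, sum_const, nsmul_one, hδ]
    ring
  calc _ = δ * (density X P ^ 2 * (s ^ 2 - 4 ^ #P * s)) - (2 * #T - 1 + δ) * E := by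
        rw [hE]
        ring
    _ ≤ δ * N - (2 * #T - 1 + δ) * E := by gcongr
    _ ≤ #(freePairs X a c (P ∪ T) (P ∪ T)) := by linarith

lemma freePairs_union_nonempty {X : ι → MulChar F ℂ} {a c : F} {P T : Finset ι} (ha : a ≠ 0)
    (hc : c ≠ 0) (hPT : Disjoint P T)
    (hX : ((P ∪ T : Finset ι) : Set ι).Pairwise
      fun i j => (orderOf (X i)).Coprime (orderOf (X j)))
    (hP : ∀ i ∈ P, X i ≠ 1) (hT : T.Nonempty) {δ : ℝ} (hδ0 : 0 < δ)
    (hδ : δ ≤ 1 - 2 * ∑ i ∈ T, (orderOf (X i) : ℝ)⁻¹)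
    (hF : 4 ^ #P * ((2 * #T - 1) / δ + 2) < √(Fintype.card F)) :
    (freePairs X a c (P ∪ T) (P ∪ T)).Nonempty := by
  set ε : ℝ := 1 - 2 * ∑ i ∈ T, (orderOf (X i) : ℝ)⁻¹ with hε
  have hε0 : 0 < ε := hδ0.trans_le hδ
  have hT1 : (0 : ℝ) ≤ 2 * #T - 1 := by
    have hone : (1 : ℝ) ≤ #T := Nat.one_le_cast.2 hT.card_pos
    linarith
  have hFε : 4 ^ #P * ((2 * #T - 1) / ε + 2) < √(Fintype.card F) := by
    refine lt_of_le_of_lt ?_ hF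
    gcongr
  have htwo : 2 ≤ √(Fintype.card F : ℝ) :=
    calc (2 : ℝ) ≤ (2 * #T - 1) / ε + 2 := le_add_of_nonneg_left (div_nonneg hT1 hε0.le)
      _ ≤ 4 ^ #P * ((2 * #T - 1) / ε + 2) :=
          le_mul_of_one_le_left (by positivity) (one_le_pow₀ (by norm_num))
      _ ≤ _ := hFε.le
  have hpos : 0 < ε * √(Fintype.card F) - 4 ^ #P * (2 * #T - 1 + 2 * ε) :=
    calc 0 < ε * (√(Fintype.card F) - 4 ^ #P * ((2 * #T - 1) / ε + 2)) :=
          mul_pos hε0 (sub_pos.2 hFε)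
      _ = _ := by field_simp
  have hle := le_card_freePairs_union ha hc hPT hX hε hε0.le htwo
  have hdens : 0 < density X P ^ 2 := pow_pos (density_pos hP) 2
  rw [← card_pos, ← Nat.cast_pos (α := ℝ)]
  exact hle.trans_lt' (by positivity)

end UnionBound

section Criterion

lemma exists_prime_order_mulChar_family (F : Type*) [Field F] [Fintype F] :
    ∃ X : ℕ → MulChar F ℂ, (∀ p ∈ (Fintype.card F - 1).primeFactors, orderOf (X p) = p) ∧
      ∀ x, IsFree X (Fintype.card F - 1).primeFactors x → orderOf x = Fintype.card F - 1 := by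
  set n := Fintype.card F - 1
  have hn : n ≠ 0 := Nat.sub_ne_zero_of_lt Fintype.one_lt_card
  obtain ⟨χ, hχ⟩ := MulChar.exists_mulChar_orderOf F dvd_rfl (Complex.isPrimitiveRoot_exp n hn)
  refine ⟨fun p => χ ^ (n / p), fun p hp => ?_, fun x ⟨hx, hfree⟩ => ?_⟩
  · have hdvd : p ∣ orderOf χ := hχ ▸ Nat.dvd_of_mem_primeFactors hp
    change orderOf (χ ^ (n / p)) = p
    rw [← show orderOf χ = n from hχ, orderOf_pow_orderOf_div (hχ ▸ hn) hdvd]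
  · refine orderOf_eq_of_pow_and_pow_div_prime hn.bot_lt (FiniteField.pow_card_sub_one_eq_one x hx)
      fun p hp hdvd hpow => hfree p (hp.mem_primeFactors hdvd hn) ?_
    have happly : (χ ^ (n / p)) x = χ x ^ (n / p) := χ.pow_apply_coe _ (Units.mk0 x hx)
    rw [happly, ← map_pow, hpow, map_one]

lemma nth_prime_card_le {s : Finset ℕ} {p : ℕ} (hp : p.Prime) (hs : ∀ r ∈ s, r.Prime ∧ r < p) :
    Nat.nth Nat.Prime #s ≤ p := by
  have hcard : #s ≤ Nat.count Nat.Prime p := by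
    rw [Nat.count_eq_card_filter_range]
    exact card_le_card fun r hr => mem_filter.2 ⟨mem_range.2 (hs r hr).2, (hs r hr).1⟩
  exact (Nat.nth_monotone Nat.infinite_setOfPred_prime hcard).trans_eq (Nat.nth_count hp)

/-- The witness consists of the `m` smallest elements of `s`. -/
lemma exists_subset_sum_sdiff_inv_le {s : Finset ℕ} (hs : ∀ p ∈ s, p.Prime) {m : ℕ}
    (hm : m ≤ #s) :
    ∃ t ⊆ s, #t = m ∧
      ∑ p ∈ s \ t, (p : ℝ)⁻¹ ≤ ∑ i ∈ Ico m #s, (Nat.nth Nat.Prime i : ℝ)⁻¹ := by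
  induction s using Finset.induction_on_max with
  | empty => exact ⟨∅, Subset.rfl, (Nat.le_zero.1 hm).symm, by simp⟩
  | insert p s hlt ih =>
    have hps : p ∉ s := fun hp => (hlt p hp).false
    rw [forall_mem_insert] at hs
    rw [card_insert_of_notMem hps] at hm ⊢
    obtain rfl | hm := hm.eq_or_lt
    · exact ⟨insert p s, Subset.rfl, card_insert_of_notMem hps, by simp⟩
    obtain ⟨t, hts, ht, hsum⟩ := ih hs.2 (Nat.lt_succ_iff.1 hm)
    have hpt : p ∉ t := fun hp => hps (hts hp)
    have hnth : Nat.nth Nat.Prime #s ≤ p :=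
      nth_prime_card_le hs.1 fun r hr => ⟨hs.2 r hr, hlt r hr⟩
    have hpos : 0 < Nat.nth Nat.Prime #s := (Nat.prime_nth_prime _).pos
    refine ⟨t, hts.trans (subset_insert _ _), ht, ?_⟩
    rw [insert_sdiff_of_notMem _ hpt, sum_insert fun h => hps (mem_sdiff.1 h).1, add_comm,
      sum_Ico_succ_top (Nat.lt_succ_iff.1 hm)]
    gcongr

lemma exists_primitive_pair_of_lt_sqrt (F : Type*) [Field F] [Fintype F] {m : ℕ} {δ : ℝ}
    (hm : m < #(Fintype.card F - 1).primeFactors) (hδ0 : 0 < δ)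
    (hδ : δ ≤ 1 - 2 * ∑ i ∈ Ico m #(Fintype.card F - 1).primeFactors,
      (Nat.nth Nat.Prime i : ℝ)⁻¹)
    (hq : 4 ^ m * ((2 * (#(Fintype.card F - 1).primeFactors - m) - 1) / δ + 2) <
      √(Fintype.card F)) {a c : F} (ha : a ≠ 0) (hc : c ≠ 0) :
    ∃ g : F, orderOf g = Fintype.card F - 1 ∧ orderOf (a - c * g) = Fintype.card F - 1 := by
  obtain ⟨X, hX, hprim⟩ := exists_prime_order_mulChar_family F
  set S := (Fintype.card F - 1).primeFactors
  have hS : ∀ p ∈ S, p.Prime := fun p => Nat.prime_of_mem_primeFactors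
  obtain ⟨P, hPS, hP, hsum⟩ := exists_subset_sum_sdiff_inv_le hS hm.le
  set T := S \ P with hT
  have hunion : P ∪ T = S := union_sdiff_of_subset hPS
  have hcardT : (#T : ℝ) = #S - m := by rw [hT, card_sdiff_of_subset hPS, hP, Nat.cast_sub hm.le]
  have hcop : (S : Set ℕ).Pairwise fun i j => (orderOf (X i)).Coprime (orderOf (X j)) := by
    intro p hp r hr hne
    rw [hX p hp, hX r hr]
    exact (Nat.coprime_primes (hS p hp) (hS r hr)).2 hne
  have hX1 : ∀ p ∈ P, X p ≠ 1 := fun p hp h => by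
    have horder := hX p (hPS hp)
    rw [h, orderOf_one] at horder
    exact (hS p (hPS hp)).ne_one horder.symm
  have hδT : δ ≤ 1 - 2 * ∑ p ∈ T, (orderOf (X p) : ℝ)⁻¹ := by
    have horder : ∑ p ∈ T, (orderOf (X p) : ℝ)⁻¹ = ∑ p ∈ T, (p : ℝ)⁻¹ :=
      sum_congr rfl fun p hp => by rw [hX p (sdiff_subset hp)]
    linarith
  have hTne : T.Nonempty := by
    rw [← card_pos, hT, card_sdiff_of_subset hPS, hP]
    exact Nat.sub_pos_of_lt hm
  obtain ⟨g, hg⟩ := freePairs_union_nonempty (T := T) ha hc disjoint_sdiff (by rwa [hunion]) hX1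
    hTne hδ0 hδT (by rwa [hP, hcardT])
  rw [hunion, mem_freePairs] at hg
  exact ⟨g, hprim g hg.1, hprim _ hg.2⟩

end Criterion

lemma sum_inv_nth_prime_Ico_three_eight :
    ∑ i ∈ Ico 3 8, (Nat.nth Nat.Prime i : ℝ)⁻¹ =
      1 / 7 + 1 / 11 + 1 / 13 + 1 / 17 + 1 / 19 := by
  have h13 : Nat.nth Nat.Prime 5 = 13 := Nat.nth_count (by norm_num : Nat.Prime 13)
  have h17 : Nat.nth Nat.Prime 6 = 17 := Nat.nth_count (by norm_num : Nat.Prime 17)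
  have h19 : Nat.nth Nat.Prime 7 = 19 := Nat.nth_count (by norm_num : Nat.Prime 19)
  simp [sum_Ico_succ_top, Nat.nth_prime_three_eq_seven, Nat.nth_prime_four_eq_eleven, h13, h17, h19]

end PrimitiveRootPair

/-- Every prime power `q` with `ω(q-1) = 8` (i.e. `q - 1` has exactly `8` distinct prime
factors) and `q > 14647129` lies in `𝒢`. -/
theorem memG_of_omega_eq_eight (q : ℕ) (hq : IsPrimePow q)
    (hω : (q - 1).primeFactors.card = 8) (h : 14647129 < q) : memG q := by
  refine ⟨hq, fun F _ _ hF a c ha hc => ?_⟩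
  subst hF
  refine PrimitiveRootPair.exists_primitive_pair_of_lt_sqrt F (m := 3)
    (δ := 1 - 2 * (1 / 7 + 1 / 11 + 1 / 13 + 1 / 17 + 1 / 19)) (by omega) (by norm_num) ?_ ?_ ha hc
  · rw [hω, PrimitiveRootPair.sum_inv_nth_prime_Ico_three_eight]
  · rw [hω]
    refine Real.lt_sqrt_of_sq_lt (lt_of_lt_of_le ?_ (Nat.cast_le.2 h))
    norm_num
end

section
/- The prime q = 13123111 = 2·3·5·7·11·13·19·23 + 1 lies in G; that is, for all non-zero a, c in the field with 13123111 elements there exists a primitive root g such that a − c·g is also a primitive root. -/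
/-!
Parametrise the pairs `(g, a - c * g)` as `(b * x, a * (1 - x))` with `b = a / c`. The indicator
function of the elements that are not `p`-th powers is a combination of characters of exponent `p`,
so the number of `x` for which both coordinates avoid the `p`-th powers, for all primes `p` in a
set `S`, is a main term plus a combination of Jacobi sums, each of absolute value at most `√q`.
Taking for `S` all the primes dividing `q - 1` makes the error too large, since it grows like
`4 ^ #S`. So only the small primes are treated in this way; the others are removed by a union bound,
in which each indicator function is compared with its mean value, so that its trivial character
drops out and the error terms get smaller.
-/

open Finset

namespace PrimitiveRootSieve

section CharExpansion

variable {F : Type*} [Field F]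

open Classical in
/-- On the non-zero elements, `f` is a linear combination, indexed by a finite type, of
multiplicative characters of exponent `e`; the coefficients of the trivial character add up to `m`
(the mean value of `f` on `Fˣ` when `F` is finite) and the absolute values of all coefficients add
up to at most `n`. Characters may be repeated, so that products are indexed by product types. -/
def HasCharExpansion (e : ℕ) (m n : ℝ) (f : F → ℝ) : Prop :=
  ∃ (ι : Type) (_ : Fintype ι) (c : ι → ℝ) (χ : ι → MulChar F ℂ),
    (∀ i, χ i ^ e = 1) ∧ ∑ i with χ i = 1, c i = m ∧ ∑ i, |c i| ≤ n ∧
      ∀ x ≠ 0, (f x : ℂ) = ∑ i, c i * χ i x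

lemma eq_one_of_coprime_of_pow_eq_one {M : Type*} [Monoid M] {x : M} {m n : ℕ}
    (hmn : m.Coprime n) (hm : x ^ m = 1) (hn : x ^ n = 1) : x = 1 := by
  rw [← pow_one x, ← hmn.gcd_eq_one, pow_gcd_eq_one]
  exact ⟨hm, hn⟩

lemma eq_one_and_eq_one_of_mul_eq_one {G : Type*} [CommGroup G] {g h : G} {m n : ℕ}
    (hmn : m.Coprime n) (hg : g ^ m = 1) (hh : h ^ n = 1) (hgh : g * h = 1) : g = 1 ∧ h = 1 := by
  obtain rfl : g = h⁻¹ := eq_inv_of_mul_eq_one_left hgh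
  have h_one : h = 1 :=
    eq_one_of_coprime_of_pow_eq_one hmn (by rwa [inv_pow, inv_eq_one] at hg) hh
  simp [h_one]

namespace HasCharExpansion

variable {e₁ e₂ : ℕ} {m₁ m₂ n₁ n₂ : ℝ} {f g : F → ℝ}

lemma one : HasCharExpansion 1 1 1 (1 : F → ℝ) := by
  refine ⟨Unit, inferInstance, 1, 1, by simp, by simp, by simp, fun x hx ↦ ?_⟩
  simp [MulChar.one_apply hx.isUnit]

lemma mul (he : e₁.Coprime e₂) (hf : HasCharExpansion e₁ m₁ n₁ f)
    (hg : HasCharExpansion e₂ m₂ n₂ g) :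
    HasCharExpansion (e₁ * e₂) (m₁ * m₂) (n₁ * n₂) (f * g) := by
  classical
  obtain ⟨ι, _, c, χ, hχ, rfl, hc, hf⟩ := hf
  obtain ⟨κ, _, d, ψ, hψ, rfl, hd, hg⟩ := hg
  refine ⟨ι × κ, inferInstance, fun k ↦ c k.1 * d k.2, fun k ↦ χ k.1 * ψ k.2, fun k ↦ ?_, ?_, ?_,
    fun x hx ↦ ?_⟩
  · rw [mul_pow, pow_mul, hχ, one_pow, mul_comm e₁, pow_mul, hψ, one_pow, one_mul]
  · have htriv : ({k | χ k.1 * ψ k.2 = 1} : Finset (ι × κ)) =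
        ({i | χ i = 1} : Finset ι) ×ˢ ({j | ψ j = 1} : Finset κ) := by
      ext k
      simp only [mem_filter_univ, mem_product]
      exact ⟨eq_one_and_eq_one_of_mul_eq_one he (hχ _) (hψ _), fun h ↦ by rw [h.1, h.2, one_mul]⟩
    rw [htriv, sum_product, sum_mul_sum]
  · calc ∑ k : ι × κ, |c k.1 * d k.2| = (∑ i, |c i|) * ∑ j, |d j| := by
          simp_rw [abs_mul, Fintype.sum_prod_type, sum_mul_sum]
      _ ≤ n₁ * n₂ := mul_le_mul hc hd (sum_nonneg fun _ _ ↦ abs_nonneg _)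
          ((sum_nonneg fun _ _ ↦ abs_nonneg _).trans hc)
  · rw [Pi.mul_apply, Complex.ofReal_mul, hf x hx, hg x hx, sum_mul_sum, Fintype.sum_prod_type]
    refine sum_congr rfl fun i _ ↦ sum_congr rfl fun j _ ↦ ?_
    rw [MulChar.mul_apply, Complex.ofReal_mul, mul_mul_mul_comm]

lemma prod {S : Finset ℕ} (hS : (S : Set ℕ).Pairwise Nat.Coprime) {m n : ℕ → ℝ} {f : ℕ → F → ℝ}
    (h : ∀ p ∈ S, HasCharExpansion p (m p) (n p) (f p)) :
    HasCharExpansion (∏ p ∈ S, p) (∏ p ∈ S, m p) (∏ p ∈ S, n p) (∏ p ∈ S, f p) := by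
  induction S using Finset.induction_on with
  | empty => exact one
  | insert p S hp ih =>
    simp_rw [prod_insert hp]
    refine mul (Nat.Coprime.prod_right fun r hr ↦ ?_) (h p (mem_insert_self p S))
      (ih (hS.mono (by simp)) fun r hr ↦ h r (mem_insert_of_mem hr))
    exact hS (by simp) (by simp [hr]) (ne_of_mem_of_not_mem hr hp).symm

end HasCharExpansion

end CharExpansion

section IsFree

/-- The element `x` is `p`-free, i.e. not a `p`-th power. This is the usual notion of being
`e`-free in the case where `e = p` is prime. -/
def IsFree {M : Type*} [Monoid M] (p : ℕ) (x : M) : Prop :=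
  ∀ y, y ^ p ≠ x

/-- The indicator function of the `p`-free elements. -/
noncomputable def freeIndicator {M : Type*} [Monoid M] (p : ℕ) : M → ℝ :=
  {x | IsFree p x}.indicator 1

/-- The function `freeIndicator p - (1 - 1 / p)`: for a prime `p` dividing `#F - 1`, this is the
deviation of `freeIndicator p` from its mean value on `Fˣ`. -/
noncomputable def centredFreeIndicator {M : Type*} [Monoid M] (p : ℕ) (x : M) : ℝ :=
  freeIndicator p x - (1 - 1 / p)

section Monoid

variable {M : Type*} [Monoid M] {p : ℕ} {x : M}

lemma freeIndicator_of_isFree (hx : IsFree p x) : freeIndicator p x = 1 :=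
  Set.indicator_of_mem (s := {x | IsFree p x}) hx 1

lemma freeIndicator_of_not_isFree (hx : ¬IsFree p x) : freeIndicator p x = 0 :=
  Set.indicator_of_notMem (s := {x | IsFree p x}) hx 1

lemma freeIndicator_nonneg (p : ℕ) (x : M) : 0 ≤ freeIndicator p x :=
  Set.indicator_nonneg (fun _ _ ↦ zero_le_one) x

lemma freeIndicator_le_one (p : ℕ) (x : M) : freeIndicator p x ≤ 1 :=
  Set.indicator_le_self' (fun _ _ ↦ zero_le_one) x

end Monoid

lemma exists_monoid_generator_pow_eq (F : Type*) [Field F] [Finite F] :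
    ∃ g : Fˣ, (∀ y, y ∈ Submonoid.powers g) ∧ ∀ x : F, x ≠ 0 → ∃ k : ℕ, (g : F) ^ k = x := by
  obtain ⟨g, hg⟩ := IsCyclic.exists_monoid_generator (α := Fˣ)
  refine ⟨g, hg, fun x hx ↦ ?_⟩
  obtain ⟨k, hk⟩ := hg (Units.mk0 x hx)
  exact ⟨k, by simpa using congrArg Units.val hk⟩

variable {F : Type*} [Field F]

lemma orderOf_eq_card_sub_one_of_isFree [Fintype F] {u : F} (hu : u ≠ 0)
    (h : ∀ p ∈ (Fintype.card F - 1).primeFactors, IsFree p u) :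
    orderOf u = Fintype.card F - 1 := by
  obtain ⟨g, hg, hpow⟩ := exists_monoid_generator_pow_eq F
  obtain ⟨k, hk⟩ := hpow u hu
  have hord : orderOf (g : F) = Fintype.card F - 1 := by
    rw [orderOf_units, orderOf_eq_card_of_forall_mem_powers hg, Nat.card_units,
      Nat.card_eq_fintype_card]
  have hcop : (orderOf (g : F)).Coprime k := by
    refine Nat.coprime_of_dvd fun p hp hpg hpk ↦ ?_
    obtain ⟨l, rfl⟩ := hpk
    have hmem : p ∈ (Fintype.card F - 1).primeFactors :=
      Nat.mem_primeFactors.mpr ⟨hp, hord ▸ hpg, (Nat.sub_pos_of_lt Fintype.one_lt_card).ne'⟩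
    exact h p hmem (g ^ l) (by rw [← pow_mul, mul_comm, hk])
  rw [← hk, hcop.orderOf_pow, hord]

lemma apply_eq_one_iff_not_isFree [Finite F] {R : Type*} [CommRing R] {p : ℕ} (hp : p.Prime)
    {χ : MulChar F R} (hχ : orderOf χ = p) {x : F} (hx : x ≠ 0) : χ x = 1 ↔ ¬IsFree p x := by
  have hχp {y : F} (hy : y ≠ 0) : χ y ^ p = 1 := by
    rw [← MulChar.pow_apply' χ hp.ne_zero, ← hχ, pow_orderOf_eq_one, MulChar.one_apply hy.isUnit]
  simp only [IsFree, not_forall, not_not]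
  refine ⟨fun h ↦ ?_, ?_⟩
  · obtain ⟨g, hg, hpow⟩ := exists_monoid_generator_pow_eq F
    obtain ⟨k, hk⟩ := hpow x hx
    have hpk : p ∣ k := by
      by_contra hpk
      have hχg : χ g = 1 := eq_one_of_coprime_of_pow_eq_one (hp.coprime_iff_not_dvd.mpr hpk)
        (hχp g.ne_zero) (by rw [← map_pow, hk, h])
      have hχ_one : χ = 1 := (MulChar.eq_iff (fun y ↦ mem_powers_iff_mem_zpowers.mp (hg y)) χ 1).mpr
        (by rw [hχg, MulChar.one_apply_coe])
      exact hp.ne_one (by rw [← hχ, hχ_one, orderOf_one])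
    obtain ⟨l, rfl⟩ := hpk
    exact ⟨g ^ l, by rw [← pow_mul, mul_comm, hk]⟩
  · rintro ⟨y, rfl⟩
    rw [map_pow, hχp (pow_ne_zero_iff hp.ne_zero |>.mp hx)]

lemma sum_pow_apply [Finite F] {p : ℕ} (hp : p.Prime) {χ : MulChar F ℂ} (hχ : orderOf χ = p)
    {x : F} (hx : x ≠ 0) : ∑ i : Fin p, (χ ^ (i : ℕ)) x = p * (1 - freeIndicator p x) := by
  have hpow (i : ℕ) : (χ ^ i) x = χ x ^ i := by
    rw [← hx.isUnit.unit_spec, MulChar.pow_apply_coe]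
  have hχp : χ x ^ p = 1 := by
    rw [← hpow, ← hχ, pow_orderOf_eq_one, MulChar.one_apply hx.isUnit]
  rw [Fin.sum_univ_eq_sum_range (fun i ↦ (χ ^ i) x), sum_congr rfl fun i _ ↦ hpow i]
  by_cases h : IsFree p x
  · have hne : χ x ≠ 1 := mt (apply_eq_one_iff_not_isFree hp hχ hx).mp (not_not.mpr h)
    simp [geom_sum_eq hne, hχp, freeIndicator_of_isFree h]
  · simp [(apply_eq_one_iff_not_isFree hp hχ hx).mpr h, freeIndicator_of_not_isFree h]

lemma hasCharExpansion_centredFreeIndicator_add [Fintype F] {p : ℕ}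
    (hp : p ∈ (Fintype.card F - 1).primeFactors) (r : ℝ) :
    HasCharExpansion p r (|r| + (1 - 1 / p)) (fun x : F ↦ centredFreeIndicator p x + r) := by
  classical
  have hprime := Nat.prime_of_mem_primeFactors hp
  obtain ⟨χ, hχ⟩ := MulChar.exists_mulChar_orderOf F (Nat.dvd_of_mem_primeFactors hp)
    (Complex.isPrimitiveRoot_exp p hprime.ne_zero)
  obtain ⟨k, rfl⟩ := Nat.exists_eq_succ_of_ne_zero hprime.ne_zero
  have hχp : χ ^ (k + 1) = 1 := orderOf_dvd_iff_pow_eq_one.mp (by rw [hχ])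
  have hχi (i : Fin (k + 1)) : χ ^ (i : ℕ) = 1 ↔ i = 0 := by
    rw [← orderOf_dvd_iff_pow_eq_one, hχ, Nat.dvd_iff_mod_eq_zero, Nat.mod_eq_of_lt i.isLt,
      Fin.val_eq_zero_iff]
  have hk : (k + 1 : ℂ) ≠ 0 := mod_cast k.succ_ne_zero
  refine ⟨Fin (k + 1), inferInstance, fun i ↦ if i = 0 then r else -1 / (k + 1),
    fun i ↦ χ ^ (i : ℕ), fun i ↦ ?_, ?_, ?_, fun x hx ↦ ?_⟩
  · rw [pow_right_comm, hχp, one_pow]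
  · simp [hχi, sum_filter]
  · have habs : |(-1 / (k + 1) : ℝ)| = 1 / (k + 1) := by
      rw [abs_div, abs_neg, abs_one, abs_of_pos (by positivity)]
    apply le_of_eq
    simp only [Fin.sum_univ_succ, if_pos, Fin.succ_ne_zero, if_false, habs, sum_const, card_univ,
      Fintype.card_fin, nsmul_eq_mul, Nat.cast_succ]
    field_simp
    ring
  · have hsum := sum_pow_apply hprime hχ hx
    simp only [Fin.sum_univ_succ, Fin.val_zero, pow_zero, MulChar.one_apply hx.isUnit] at hsum
    simp only [Fin.sum_univ_succ, if_pos, Fin.succ_ne_zero, if_false, Fin.val_zero, pow_zero,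
      MulChar.one_apply hx.isUnit, ← mul_sum, eq_sub_of_add_eq' hsum, centredFreeIndicator]
    push_cast
    field_simp
    ring

lemma hasCharExpansion_centredFreeIndicator [Fintype F] {p : ℕ}
    (hp : p ∈ (Fintype.card F - 1).primeFactors) :
    HasCharExpansion p 0 (1 - 1 / p) (centredFreeIndicator p : F → ℝ) := by
  simpa using hasCharExpansion_centredFreeIndicator_add hp 0

lemma hasCharExpansion_freeIndicator [Fintype F] {p : ℕ}
    (hp : p ∈ (Fintype.card F - 1).primeFactors) :
    HasCharExpansion p (1 - 1 / p) (2 * (1 - 1 / p)) (freeIndicator p : F → ℝ) := by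
  have hmean : (0 : ℝ) ≤ 1 - 1 / p := by
    rw [one_div]
    exact sub_nonneg.mpr (Nat.cast_inv_le_one p)
  have h := hasCharExpansion_centredFreeIndicator_add (F := F) hp (1 - 1 / p)
  rw [abs_of_nonneg hmean, ← two_mul] at h
  simpa [centredFreeIndicator] using h

end IsFree

section LineSum

variable {F : Type*} [Field F]

lemma norm_apply_eq_one [Finite F] (χ : MulChar F ℂ) {x : F} (hx : x ≠ 0) : ‖χ x‖ = 1 := by
  have := Fintype.ofFinite F
  refine Complex.norm_eq_one_of_pow_eq_one (n := Fintype.card F - 1) ?_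
    (Nat.sub_pos_of_lt Fintype.one_lt_card).ne'
  rw [← map_pow, FiniteField.pow_card_sub_one_eq_one x hx, map_one]

variable [Fintype F]

lemma norm_jacobiSum_eq_sqrt {χ ψ : MulChar F ℂ} (hχ : χ ≠ 1) (hψ : ψ ≠ 1) (hχψ : χ * ψ ≠ 1) :
    ‖jacobiSum χ ψ‖ = √(Fintype.card F) := by
  have hconj : jacobiSum χ⁻¹ ψ⁻¹ = star (jacobiSum χ ψ) := by
    simp_rw [jacobiSum, star_sum, star_mul', MulChar.star_apply']
  have hchar : ringChar ℂ ≠ ringChar F := by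
    rw [ringChar.eq_zero]
    exact (CharP.ringChar_ne_zero_of_finite F).symm
  have hmul := jacobiSum_mul_jacobiSum_inv hchar hχ hψ hχψ
  rw [hconj, RCLike.star_def, Complex.mul_conj, Complex.normSq_eq_norm_sq] at hmul
  have hsq : ‖jacobiSum χ ψ‖ ^ 2 = Fintype.card F := by exact_mod_cast hmul
  rw [← hsq, Real.sqrt_sq (norm_nonneg _)]

lemma norm_jacobiSum_le_sqrt {χ ψ : MulChar F ℂ} (h : ¬(χ = 1 ∧ ψ = 1)) :
    ‖jacobiSum χ ψ‖ ≤ √(Fintype.card F) := by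
  have hone : 1 ≤ √(Fintype.card F : ℝ) := Real.one_le_sqrt.mpr (mod_cast Fintype.card_pos)
  by_cases hχ : χ = 1
  · rwa [hχ, jacobiSum_one_nontrivial fun hψ ↦ h ⟨hχ, hψ⟩, norm_neg, norm_one]
  by_cases hψ : ψ = 1
  · rwa [hψ, jacobiSum_comm, jacobiSum_one_nontrivial hχ, norm_neg, norm_one]
  by_cases hχψ : χ * ψ = 1
  · rwa [eq_inv_of_mul_eq_one_right hχψ, jacobiSum_nontrivial_inv hχ, norm_neg,
      norm_apply_eq_one χ (neg_ne_zero.mpr one_ne_zero)]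
  · exact (norm_jacobiSum_eq_sqrt hχ hψ hχψ).le

open Classical in
/-- The sum of `f u * g v` over the points `(u, v) = (b * x, a * (1 - x))` of the line
`u / b + v / a = 1` off the coordinate axes. -/
noncomputable def lineSum (a b : F) (f g : F → ℝ) : ℝ :=
  ∑ x ∈ univ \ {0, 1}, f (b * x) * g (a * (1 - x))

lemma lineSum_eq_sum_jacobiSum {ι κ : Type*} [Fintype ι] [Fintype κ] {c : ι → ℝ} {d : κ → ℝ}
    {χ : ι → MulChar F ℂ} {ψ : κ → MulChar F ℂ} {f g : F → ℝ}
    (hf : ∀ x ≠ 0, (f x : ℂ) = ∑ i, c i * χ i x) (hg : ∀ x ≠ 0, (g x : ℂ) = ∑ j, d j * ψ j x)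
    {a b : F} (ha : a ≠ 0) (hb : b ≠ 0) :
    (lineSum a b f g : ℂ) = ∑ k : ι × κ,
      c k.1 * d k.2 * (χ k.1 b * ψ k.2 a) * jacobiSum (χ k.1) (ψ k.2) := by
  classical
  simp_rw [lineSum, jacobiSum_eq_sum_sdiff, mul_sum]
  push_cast
  rw [sum_comm]
  refine sum_congr (by congr) fun x hx ↦ ?_
  obtain ⟨hx0, hx1⟩ : x ≠ 0 ∧ x ≠ 1 := by simpa using hx
  rw [hf _ (mul_ne_zero hb hx0), hg _ (mul_ne_zero ha (sub_ne_zero.mpr hx1.symm)), sum_mul_sum,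
    Fintype.sum_prod_type]
  refine sum_congr rfl fun i _ ↦ sum_congr rfl fun j _ ↦ ?_
  rw [map_mul, map_mul]
  ring

theorem HasCharExpansion.abs_lineSum_sub_le {e₁ e₂ : ℕ} {m₁ n₁ m₂ n₂ : ℝ} {f g : F → ℝ}
    (hf : HasCharExpansion e₁ m₁ n₁ f) (hg : HasCharExpansion e₂ m₂ n₂ g) {a b : F} (ha : a ≠ 0)
    (hb : b ≠ 0) :
    |lineSum a b f g - m₁ * m₂ * (Fintype.card F - 2)| ≤ n₁ * n₂ * √(Fintype.card F) := by
  classical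
  obtain ⟨ι, _, c, χ, -, hm₁, hn₁, hf⟩ := hf
  obtain ⟨κ, _, d, ψ, -, hm₂, hn₂, hg⟩ := hg
  let t (k : ι × κ) : ℂ := c k.1 * d k.2 * (χ k.1 b * ψ k.2 a) * jacobiSum (χ k.1) (ψ k.2)
  let trivialPairs : Finset (ι × κ) := ({i | χ i = 1} : Finset ι) ×ˢ ({j | ψ j = 1} : Finset κ)
  have hmain : ∑ k ∈ trivialPairs, t k = (m₁ * m₂ * (Fintype.card F - 2) : ℝ) := by
    have ht : ∀ k ∈ trivialPairs, t k = c k.1 * d k.2 * (Fintype.card F - 2) := by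
      intro k hk
      obtain ⟨hχ, hψ⟩ : χ k.1 = 1 ∧ ψ k.2 = 1 := by simpa [trivialPairs] using hk
      simp only [t, hχ, hψ, jacobiSum_one_one, MulChar.one_apply ha.isUnit,
        MulChar.one_apply hb.isUnit, mul_one]
    rw [sum_congr rfl ht, ← sum_mul, ← hm₁, ← hm₂]
    push_cast
    rw [sum_mul_sum, ← sum_product']
    congr!
  have hnorm : ∀ k ∈ trivialPairsᶜ, ‖t k‖ ≤ |c k.1| * |d k.2| * √(Fintype.card F) := by
    intro k hk
    simp only [t, norm_mul, norm_apply_eq_one _ ha, norm_apply_eq_one _ hb, mul_one,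
      Complex.norm_real, Real.norm_eq_abs]
    gcongr
    exact norm_jacobiSum_le_sqrt fun h ↦ mem_compl.mp hk (by simpa [trivialPairs] using h)
  rw [← Real.norm_eq_abs, ← Complex.norm_real, Complex.ofReal_sub,
    lineSum_eq_sum_jacobiSum hf hg ha hb, ← hmain, ← sum_add_sum_compl trivialPairs t,
    add_sub_cancel_left]
  calc ‖∑ k ∈ trivialPairsᶜ, t k‖
      ≤ ∑ k ∈ trivialPairsᶜ, |c k.1| * |d k.2| * √(Fintype.card F) := norm_sum_le_of_le _ hnorm
    _ ≤ ∑ k : ι × κ, |c k.1| * |d k.2| * √(Fintype.card F) :=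
        sum_le_sum_of_subset_of_nonneg (subset_univ _) fun _ _ _ ↦ by positivity
    _ = (∑ i, |c i|) * (∑ j, |d j|) * √(Fintype.card F) := by
        rw [← sum_mul, Fintype.sum_prod_type, sum_mul_sum]
    _ ≤ n₁ * n₂ * √(Fintype.card F) := by
        have := (sum_nonneg fun i _ ↦ abs_nonneg (c i)).trans hn₁
        gcongr

end LineSum

section Sieve

/-- The product `∏ p ∈ S, (1 - 1 / p)`, called `θ` in the literature: for a set `S` of primes
dividing `#F - 1`, this is the density in `Fˣ` of the elements that are `p`-free for all `p ∈ S`. -/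
noncomputable def freeDensity (S : Finset ℕ) : ℝ :=
  ∏ p ∈ S, (1 - 1 / p : ℝ)

/-- The quantity called `δ` in the literature on the prime sieve: what remains of `1` after
sieving two coordinates by all the primes in `T`. -/
noncomputable def sieveDelta (T : Finset ℕ) : ℝ :=
  1 - 2 * ∑ p ∈ T, (1 / p : ℝ)

/-- The indicator function of the elements that are `p`-free for all `p ∈ S`. -/
noncomputable def freeIndicatorProd {M : Type*} [Monoid M] (S : Finset ℕ) : M → ℝ :=
  ∏ p ∈ S, freeIndicator p

lemma one_sub_sum_one_sub_le_prod {ι R : Type*} [CommRing R] [LinearOrder R]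
    [IsStrictOrderedRing R] {s : Finset ι} {w : ι → R}
    (hw₀ : ∀ i ∈ s, 0 ≤ w i) (hw₁ : ∀ i ∈ s, w i ≤ 1) :
    1 - ∑ i ∈ s, (1 - w i) ≤ ∏ i ∈ s, w i := by
  classical
  induction s using Finset.induction_on with
  | empty => simp
  | insert i s hi ih =>
    rw [forall_mem_insert] at hw₀ hw₁
    rw [sum_insert hi, prod_insert hi]
    nlinarith [ih hw₀.2 hw₁.2, prod_le_one hw₀.2 hw₁.2]

section Monoid

variable {M : Type*} [Monoid M] {S T : Finset ℕ}

lemma isFree_of_freeIndicatorProd_ne_zero {x : M} (hx : freeIndicatorProd S x ≠ 0) {p : ℕ}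
    (hp : p ∈ S) : IsFree p x := by
  rw [freeIndicatorProd, Finset.prod_apply] at hx
  by_contra h
  exact prod_ne_zero_iff.mp hx p hp (freeIndicator_of_not_isFree h)

lemma freeIndicatorProd_nonneg (S : Finset ℕ) (x : M) : 0 ≤ freeIndicatorProd S x := by
  rw [freeIndicatorProd, Finset.prod_apply]
  exact prod_nonneg fun p _ ↦ freeIndicator_nonneg p x

lemma mul_one_sub_sum_le_freeIndicatorProd_union (hST : Disjoint S T) (u v : M) :
    freeIndicatorProd S u * freeIndicatorProd S v *
        (1 - ∑ p ∈ T, ((1 - freeIndicator p u) + (1 - freeIndicator p v))) ≤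
      freeIndicatorProd (S ∪ T) u * freeIndicatorProd (S ∪ T) v := by
  have hunion : 1 - ∑ p ∈ T, ((1 - freeIndicator p u) + (1 - freeIndicator p v)) ≤
      freeIndicatorProd T u * freeIndicatorProd T v := by
    have hu₀ (p : ℕ) := freeIndicator_nonneg p u
    have hu₁ (p : ℕ) := freeIndicator_le_one p u
    have hv₀ (p : ℕ) := freeIndicator_nonneg p v
    have hv₁ (p : ℕ) := freeIndicator_le_one p v
    rw [freeIndicatorProd, Finset.prod_apply, Finset.prod_apply, ← prod_mul_distrib]
    calc 1 - ∑ p ∈ T, ((1 - freeIndicator p u) + (1 - freeIndicator p v))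
        ≤ 1 - ∑ p ∈ T, (1 - freeIndicator p u * freeIndicator p v) := by
          gcongr with p
          linarith [mul_nonneg (sub_nonneg.mpr (hu₁ p)) (sub_nonneg.mpr (hv₁ p))]
      _ ≤ _ := one_sub_sum_one_sub_le_prod (fun p _ ↦ mul_nonneg (hu₀ p) (hv₀ p))
          fun p _ ↦ mul_le_one₀ (hu₁ p) (hv₀ p) (hv₁ p)
  calc _ ≤ freeIndicatorProd S u * freeIndicatorProd S v *
        (freeIndicatorProd T u * freeIndicatorProd T v) := by
        gcongr
        exact mul_nonneg (freeIndicatorProd_nonneg S u) (freeIndicatorProd_nonneg S v)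
    _ = _ := by
        simp_rw [freeIndicatorProd, prod_union hST, Pi.mul_apply]
        ring

lemma one_sub_sum_one_sub_freeIndicator (T : Finset ℕ) (u v : M) :
    1 - ∑ p ∈ T, ((1 - freeIndicator p u) + (1 - freeIndicator p v)) =
      sieveDelta T + ∑ p ∈ T, (centredFreeIndicator p u + centredFreeIndicator p v) := by
  simp only [centredFreeIndicator, sieveDelta, sum_add_distrib, sum_sub_distrib]
  ring

end Monoid

variable {F : Type*} [Field F] [Fintype F] {S T : Finset ℕ}

lemma coprime_of_mem_primeFactors {n p r : ℕ} (hp : p ∈ n.primeFactors) (hr : r ∈ n.primeFactors)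
    (hne : p ≠ r) : p.Coprime r :=
  (Nat.coprime_primes (Nat.prime_of_mem_primeFactors hp) (Nat.prime_of_mem_primeFactors hr)).mpr hne

lemma freeDensity_pos (hS : ∀ p ∈ S, 1 < p) : 0 < freeDensity S := by
  refine prod_pos fun p hp ↦ ?_
  have hp_one : (1 : ℝ) < p := mod_cast hS p hp
  rw [sub_pos, div_lt_one (by positivity)]
  exact hp_one

lemma hasCharExpansion_freeIndicatorProd (hS : S ⊆ (Fintype.card F - 1).primeFactors) :
    HasCharExpansion (∏ p ∈ S, p) (freeDensity S) (2 ^ #S * freeDensity S)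
      (freeIndicatorProd S : F → ℝ) := by
  have h := HasCharExpansion.prod (F := F)
    (fun p hp r hr ↦ coprime_of_mem_primeFactors (hS hp) (hS hr))
    fun p hp ↦ hasCharExpansion_freeIndicator (hS hp)
  rwa [prod_mul_distrib, prod_const] at h

lemma hasCharExpansion_freeIndicatorProd_mul (hS : S ⊆ (Fintype.card F - 1).primeFactors) {p : ℕ}
    (hp : p ∈ (Fintype.card F - 1).primeFactors) (hpS : p ∉ S) :
    HasCharExpansion ((∏ r ∈ S, r) * p) 0 (2 ^ #S * freeDensity S * (1 - 1 / p))
      (freeIndicatorProd S * centredFreeIndicator p : F → ℝ) := by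
  have hcop : (∏ r ∈ S, r).Coprime p := Nat.Coprime.prod_left fun r hr ↦
    coprime_of_mem_primeFactors (hS hr) hp (ne_of_mem_of_not_mem hr hpS)
  simpa only [mul_zero] using
    (hasCharExpansion_freeIndicatorProd hS).mul hcop (hasCharExpansion_centredFreeIndicator hp)

lemma le_lineSum_freeIndicatorProd_union (hST : Disjoint S T) (a b : F) :
    sieveDelta T * lineSum a b (freeIndicatorProd S) (freeIndicatorProd S) +
        ∑ p ∈ T, (lineSum a b (freeIndicatorProd S * centredFreeIndicator p) (freeIndicatorProd S) +
          lineSum a b (freeIndicatorProd S) (freeIndicatorProd S * centredFreeIndicator p)) ≤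
      lineSum a b (freeIndicatorProd (S ∪ T)) (freeIndicatorProd (S ∪ T)) := by
  classical
  simp_rw [lineSum, ← sum_add_distrib]
  rw [sum_comm, mul_sum, ← sum_add_distrib]
  refine sum_le_sum fun x _ ↦ ?_
  refine le_of_eq_of_le ?_
    (mul_one_sub_sum_le_freeIndicatorProd_union hST (b * x) (a * (1 - x)))
  rw [one_sub_sum_one_sub_freeIndicator, mul_add, mul_comm (sieveDelta T), mul_sum]
  refine congrArg (_ + ·) (sum_congr rfl fun p _ ↦ ?_)
  rw [Pi.mul_apply, Pi.mul_apply]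
  ring

theorem le_lineSum_freeIndicatorProd (hST : Disjoint S T)
    (hfac : S ∪ T ⊆ (Fintype.card F - 1).primeFactors) (hδ : 0 ≤ sieveDelta T) {a b : F}
    (ha : a ≠ 0) (hb : b ≠ 0) :
    freeDensity S ^ 2 * (sieveDelta T * (Fintype.card F - 2) -
        4 ^ #S * (2 * #T - 1 + 2 * sieveDelta T) * √(Fintype.card F)) ≤
      lineSum a b (freeIndicatorProd (S ∪ T)) (freeIndicatorProd (S ∪ T)) := by
  obtain ⟨hS, hT⟩ := union_subset_iff.mp hfac
  have hcore := hasCharExpansion_freeIndicatorProd (F := F) hS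
  set K : ℝ := 4 ^ #S * freeDensity S ^ 2 * √(Fintype.card F) with hK
  have hfour : (4 : ℝ) ^ #S = 2 ^ #S * 2 ^ #S := by rw [← mul_pow]; norm_num
  have hmain : freeDensity S ^ 2 * (Fintype.card F - 2) - K ≤
      lineSum a b (freeIndicatorProd S) (freeIndicatorProd S) := by
    have h := neg_le_of_abs_le (hcore.abs_lineSum_sub_le hcore ha hb)
    rw [hK, hfour]
    linarith
  have herror : ∀ p ∈ T, -(2 * K * (1 - 1 / p)) ≤
      lineSum a b (freeIndicatorProd S * centredFreeIndicator p) (freeIndicatorProd S) +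
        lineSum a b (freeIndicatorProd S) (freeIndicatorProd S * centredFreeIndicator p) := by
    intro p hp
    have hsieved := hasCharExpansion_freeIndicatorProd_mul hS (hT hp) (disjoint_right.mp hST hp)
    have h₁ := neg_le_of_abs_le (hsieved.abs_lineSum_sub_le hcore ha hb)
    have h₂ := neg_le_of_abs_le (hcore.abs_lineSum_sub_le hsieved ha hb)
    rw [hK, hfour]
    linarith
  have hsum : ∑ p ∈ T, -(2 * K * (1 - 1 / p : ℝ)) = -K * (2 * #T - 1 + sieveDelta T) := by
    simp only [sieveDelta, sum_neg_distrib, ← mul_sum, sum_sub_distrib, sum_const, nsmul_eq_mul]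
    ring
  calc _ = sieveDelta T * (freeDensity S ^ 2 * (Fintype.card F - 2) - K) +
        ∑ p ∈ T, -(2 * K * (1 - 1 / p : ℝ)) := by rw [hsum, hK]; ring
    _ ≤ _ := add_le_add (mul_le_mul_of_nonneg_left hmain hδ) (sum_le_sum herror)
    _ ≤ _ := le_lineSum_freeIndicatorProd_union hST a b

theorem exists_isFree (hST : Disjoint S T) (hfac : S ∪ T ⊆ (Fintype.card F - 1).primeFactors)
    (hδ : 0 < sieveDelta T)
    (hbound : 4 ^ #S * ((2 * #T - 1) / sieveDelta T + 2) * √(Fintype.card F) < Fintype.card F - 2)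
    {a b : F} (ha : a ≠ 0) (hb : b ≠ 0) :
    ∃ x, x ≠ 0 ∧ x ≠ 1 ∧ ∀ p ∈ S ∪ T, IsFree p (b * x) ∧ IsFree p (a * (1 - x)) := by
  classical
  have hlower : 0 < sieveDelta T * (Fintype.card F - 2) -
      4 ^ #S * (2 * #T - 1 + 2 * sieveDelta T) * √(Fintype.card F) := by
    have h := mul_lt_mul_of_pos_left hbound hδ
    field_simp at h
    linarith
  have hdensity : 0 < freeDensity S := freeDensity_pos fun p hp ↦
    (Nat.prime_of_mem_primeFactors (hfac (mem_union_left T hp))).one_lt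
  have hpos : 0 < lineSum a b (freeIndicatorProd (S ∪ T)) (freeIndicatorProd (S ∪ T)) :=
    (mul_pos (pow_pos hdensity 2) hlower).trans_le
      (le_lineSum_freeIndicatorProd hST hfac hδ.le ha hb)
  obtain ⟨x, hx, hne⟩ := exists_ne_zero_of_sum_ne_zero hpos.ne'
  obtain ⟨hx₀, hx₁⟩ : x ≠ 0 ∧ x ≠ 1 := by simpa using hx
  exact ⟨x, hx₀, hx₁, fun p hp ↦
    ⟨isFree_of_freeIndicatorProd_ne_zero (left_ne_zero_of_mul hne) hp,
      isFree_of_freeIndicatorProd_ne_zero (right_ne_zero_of_mul hne) hp⟩⟩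

theorem memG_of_sieve {q : ℕ} (hq : IsPrimePow q) {S T : Finset ℕ} (hST : Disjoint S T)
    (hfac : (q - 1).primeFactors = S ∪ T) (hδ : 0 < sieveDelta T)
    (hbound : 4 ^ #S * ((2 * #T - 1) / sieveDelta T + 2) * √q < q - 2) : memG q := by
  refine ⟨hq, fun F _ _ hF a c ha hc ↦ ?_⟩
  subst hF
  have hb : a / c ≠ 0 := div_ne_zero ha hc
  obtain ⟨x, hx₀, hx₁, hx⟩ := exists_isFree hST hfac.ge hδ hbound ha hb
  rw [← hfac] at hx
  refine ⟨a / c * x,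
    orderOf_eq_card_sub_one_of_isFree (mul_ne_zero hb hx₀) fun p hp ↦ (hx p hp).1, ?_⟩
  have heq : a - c * (a / c * x) = a * (1 - x) := by field_simp
  rw [heq]
  exact orderOf_eq_card_sub_one_of_isFree (mul_ne_zero ha (sub_ne_zero.mpr hx₁.symm))
    fun p hp ↦ (hx p hp).2

end Sieve

end PrimitiveRootSieve

open PrimitiveRootSieve in
/-- The prime `q = 13123111 = 2·3·5·7·11·13·19·23 + 1` lies in `𝒢`: for all non-zero
`a, c` in the field with `13123111` elements there exists a primitive root `g` such that
`a - c·g` is also a primitive root. -/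
theorem memG_13123111 :
    Nat.Prime 13123111 ∧ 13123111 = 2 * 3 * 5 * 7 * 11 * 13 * 19 * 23 + 1 ∧
    memG 13123111 := by
  have hprime : Nat.Prime 13123111 := by norm_num
  have hfactors : Nat.primeFactorsList (13123111 - 1) = [2, 3, 5, 7, 11, 13, 19, 23] := by simp
  have hδ : sieveDelta {7, 11, 13, 19, 23} = 81539 / 437437 := by norm_num [sieveDelta]
  have hsqrt : √(13123111 : ℕ) < 3623 := (Real.sqrt_lt' (by norm_num)).mpr (by norm_num)
  refine ⟨hprime, by norm_num, memG_of_sieve hprime.isPrimePow (S := {2, 3, 5})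
    (T := {7, 11, 13, 19, 23}) (by decide) ?_ (by norm_num [hδ]) ?_⟩
  · rw [Nat.primeFactors, hfactors]
    decide
  · exact (mul_lt_mul_of_pos_left hsqrt (by norm_num [hδ])).trans (by norm_num [hδ])
end
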